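/- arXiv:1504.06970 — 7 statements merged into one kernel-verified Lean document; each statement's English description precedes it below -/
import Mathlib

section
/- Let M_n denote the smallest mode of the sequence of ordered Stirling numbers, i.e., the smallest k in {1, ..., n} maximizing Surj(n,k). Then M_n is asymptotically n/(2 log 2): the ratio M_n / (n / (2 log 2)) tends to 1 as n → ∞. -/
/-- The number of surjective functions from `Fin n` onto `Fin k`
(the ordered Stirling number `k! * S(n,k)`). -/
def Surj (n k : ℕ) : ℕ :=
  Fintype.card {f : Fin n → Fin k // Function.Surjective f}

/-!
Two bounds confine the mode. Since `m ^ n = ∑ k, m.choose k * Surj n k`, the maximal entry `A` of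
row `n` satisfies `m ^ n ≤ 2 ^ m * A` for every `m`; the choice `m ≈ n / log 2` is optimal. On the
other hand `Surj n k * x ^ n / n!` is a term of the nonnegative series for `(exp x - 1) ^ k`. For an
entry `k = M n` attaining the maximum, Stirling's bound on `n!` turns the two estimates into
`log x - log (log 2) ≤ (M n / n) * log (exp x - 1) + o(1)` for every `x > 0`. Both sides vanish in
the limit at `x = log 2`, so at a cluster point of `M n / n` the two sides are tangent there, and
comparing derivatives gives `1 / log 2 = 2 * lim (M n / n)`.
-/

open Filter Finset Topology
open scoped Nat

section Counting

variable {α β : Type*} [Fintype α] [Fintype β] [DecidableEq α] [DecidableEq β]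

lemma card_surjective_eq_Surj :
    Fintype.card {f : α → β // Function.Surjective f} =
      Surj (Fintype.card α) (Fintype.card β) := by
  let e := (Fintype.equivFin α).arrowCongr (Fintype.equivFin β)
  exact Fintype.card_congr <| e.subtypeEquiv fun f ↦ by simp [e, Equiv.arrowCongr]

lemma card_filter_image_eq (s : Finset β) :
    #{f : α → β | univ.image f = s} = Surj (Fintype.card α) #s := by
  rw [← Fintype.card_coe s, ← card_surjective_eq_Surj, ← Fintype.card_subtype]
  refine Fintype.card_congr
    { toFun f := ⟨fun a ↦ ⟨f.1 a, by simp [← f.2]⟩, ?_⟩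
      invFun g := ⟨fun a ↦ g.1 a, ?_⟩ }
  · rintro ⟨b, hb⟩
    simpa [← f.2, Subtype.ext_iff] using hb
  · ext b
    simpa [Subtype.ext_iff] using ⟨fun ⟨a, ha⟩ ↦ ha ▸ (g.1 a).2, fun hb ↦ (g.2 ⟨b, hb⟩).imp
      fun a ha ↦ congrArg Subtype.val ha⟩

end Counting

lemma sum_choose_mul_Surj (n m : ℕ) :
    ∑ k ∈ range (m + 1), m.choose k * Surj n k = m ^ n :=
  calc ∑ k ∈ range (m + 1), m.choose k * Surj n k
    _ = ∑ s : Finset (Fin m), Surj n #s := by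
      simpa using (sum_powerset_apply_card (f := Surj n) (x := (univ : Finset (Fin m)))).symm
    _ = ∑ s : Finset (Fin m), #{f : Fin n → Fin m | univ.image f = s} := by
      simp only [card_filter_image_eq, Fintype.card_fin]
    _ = m ^ n := by
      rw [← card_eq_sum_card_fiberwise fun _ _ ↦ mem_coe.2 (mem_univ _)]
      simp

lemma pow_le_two_pow_mul_of_forall_Surj_le {n A : ℕ} (hA : ∀ k, Surj n k ≤ A) (m : ℕ) :
    m ^ n ≤ 2 ^ m * A := by
  rw [← sum_choose_mul_Surj, ← Nat.sum_range_choose, sum_mul]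
  gcongr
  exact hA _

lemma Surj_zero_right {n : ℕ} (hn : n ≠ 0) : Surj n 0 = 0 :=
  Fintype.card_eq_zero_iff.2 ⟨fun f ↦ (f.1 ⟨0, hn.bot_lt⟩).elim0⟩

lemma Surj_eq_zero_of_lt {n k : ℕ} (h : n < k) : Surj n k = 0 :=
  Fintype.card_eq_zero_iff.2
    ⟨fun f ↦ h.not_ge <| by simpa using Fintype.card_le_of_surjective f.1 f.2⟩

lemma Surj_le_of_forall_mem_Icc {n A : ℕ} (hn : n ≠ 0) (hA : ∀ k ∈ Icc 1 n, Surj n k ≤ A)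
    (k : ℕ) : Surj n k ≤ A := by
  rcases Nat.eq_zero_or_pos k with rfl | hk
  · simp [Surj_zero_right hn]
  · rcases le_or_gt k n with hkn | hkn
    · exact hA k (mem_Icc.2 ⟨hk, hkn⟩)
    · simp [Surj_eq_zero_of_lt hkn]

/- Substituting `exp x = 1 + (exp x - 1)` in `exp (m * x)` and comparing with
`sum_choose_mul_Surj` determines the series for `k = m` from those for `k < m`. -/
lemma hasSum_Surj_div_factorial_mul_pow (k : ℕ) (x : ℝ) :
    HasSum (fun n ↦ Surj n k / n ! * x ^ n) ((Real.exp x - 1) ^ k) := by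
  induction k using Nat.strong_induction_on with
  | h m ih =>
    have hterm (n : ℕ) : ∑ k ∈ range (m + 1), m.choose k * (Surj n k / n ! * x ^ n) =
        (m * x) ^ n / n ! := by
      rw [mul_pow, ← Nat.cast_pow, ← sum_choose_mul_Surj n m]
      push_cast
      rw [sum_mul, sum_div]
      exact sum_congr rfl fun k _ ↦ by ring
    have hexp : ∑ k ∈ range (m + 1), m.choose k * (Real.exp x - 1) ^ k = Real.exp (m * x) := by
      rw [Real.exp_nat_mul, ← sub_add_cancel (Real.exp x) 1, add_pow]
      exact sum_congr rfl fun k _ ↦ by ring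
    have htotal : HasSum (fun n ↦ ∑ k ∈ range (m + 1), m.choose k * (Surj n k / n ! * x ^ n))
        (∑ k ∈ range (m + 1), m.choose k * (Real.exp x - 1) ^ k) := by
      rw [hexp, Real.exp_eq_exp_ℝ]
      simpa only [hterm] using NormedSpace.expSeries_div_hasSum_exp (m * x)
    have hlower := hasSum_sum fun k hk ↦ (ih k (mem_range.1 hk)).mul_left (m.choose k : ℝ)
    simpa [sum_range_succ] using htotal.sub hlower

lemma Surj_mul_pow_le (n k : ℕ) {x : ℝ} (hx : 0 ≤ x) :
    Surj n k * x ^ n ≤ (Real.exp x - 1) ^ k * n ! := by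
  have h := le_hasSum (hasSum_Surj_div_factorial_mul_pow k x) n fun _ _ ↦ by positivity
  rwa [div_mul_eq_mul_div, div_le_iff₀ (by positivity)] at h

lemma log_factorial_le {n : ℕ} (hn : n ≠ 0) :
    Real.log n ! ≤ n * Real.log n - n + Real.log n / 2 + 1 := by
  obtain ⟨m, rfl⟩ := Nat.exists_eq_succ_of_ne_zero hn
  have h := Stirling.log_stirlingSeq'_antitone m.zero_le
  simp only [Function.comp_apply, Stirling.log_stirlingSeq_formula] at h
  simp (disch := positivity) only [Real.log_div, Real.log_mul, Real.log_exp] at h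
  norm_num at h ⊢
  linarith

lemma le_log_of_forall_Surj_le {n A : ℕ} (hn : n ≠ 0) (hA : ∀ k, Surj n k ≤ A) :
    n * Real.log n - n * Real.log (Real.log 2) - n - 1 ≤ Real.log A := by
  have hL : 0 < Real.log 2 := Real.log_pos one_lt_two
  set m := ⌈n / Real.log 2⌉₊
  have hm_ge : n / Real.log 2 ≤ m := Nat.le_ceil _
  have hm_pos : (0 : ℝ) < m := lt_of_lt_of_le (by positivity) hm_ge
  have hm_le : m * Real.log 2 ≤ n + 1 :=
    calc m * Real.log 2 ≤ (n / Real.log 2 + 1) * Real.log 2 := by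
          gcongr; exact (Nat.ceil_lt_add_one (by positivity)).le
      _ = n + Real.log 2 := by field_simp
      _ ≤ n + 1 := by linarith [Real.log_two_lt_d9]
  have hlog_m : Real.log n - Real.log (Real.log 2) ≤ Real.log m := by
    rw [← Real.log_div (by positivity) hL.ne']
    exact Real.log_le_log (by positivity) hm_ge
  have hpow : (m : ℝ) ^ n ≤ 2 ^ m * A := by
    exact_mod_cast pow_le_two_pow_mul_of_forall_Surj_le hA m
  have hA_pos : (0 : ℝ) < A :=
    pos_of_mul_pos_right ((pow_pos hm_pos n).trans_le hpow) (by positivity)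
  have hlog : n * Real.log m ≤ m * Real.log 2 + Real.log A := by
    simpa [Real.log_mul, hA_pos.ne'] using Real.log_le_log (by positivity) hpow
  have := mul_le_mul_of_nonneg_left hlog_m n.cast_nonneg
  linarith

lemma log_Surj_le {n k : ℕ} (h : Surj n k ≠ 0) {x : ℝ} (hx : 0 < x) :
    Real.log (Surj n k) ≤ k * Real.log (Real.exp x - 1) + Real.log n ! - n * Real.log x := by
  have hexp : 0 < Real.exp x - 1 := sub_pos.2 (Real.one_lt_exp_iff.2 hx)
  have hlog := Real.log_le_log (by positivity) (Surj_mul_pow_le n k hx.le)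
  rw [Real.log_mul (by positivity) (by positivity), Real.log_mul (by positivity) (by positivity),
    Real.log_pow, Real.log_pow] at hlog
  linarith

lemma log_sub_log_log_two_le_of_forall_Surj_le {n k : ℕ} (hn : n ≠ 0)
    (hk : ∀ j, Surj n j ≤ Surj n k) {x : ℝ} (hx : 0 < x) :
    Real.log x - Real.log (Real.log 2) ≤
      k / n * Real.log (Real.exp x - 1) + (Real.log n / 2 + 2) / n := by
  have hn_pos : (0 : ℝ) < n := by positivity
  have hSurj : Surj n k ≠ 0 := fun h ↦ by
    simpa [h] using pow_le_two_pow_mul_of_forall_Surj_le hk 1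
  rw [div_mul_eq_mul_div, ← add_div, le_div_iff₀ hn_pos]
  linarith [le_log_of_forall_Surj_le hn hk, log_Surj_le hSurj hx, log_factorial_le hn]

/- At a cluster point `t` of `r` the function `t * g - f` has a local minimum at `a`. -/
lemma tendsto_div_of_eventually_le_mul_add {ι : Type*} {l : Filter ι} {r ε : ι → ℝ} {s : Set ℝ}
    (hs : IsCompact s) (hr : ∀ᶠ i in l, r i ∈ s) (hε : Tendsto ε l (𝓝 0))
    {f g : ℝ → ℝ} {f' g' a : ℝ} (hf : HasDerivAt f f' a) (hg : HasDerivAt g g' a)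
    (hfa : f a = 0) (hga : g a = 0) (hg' : g' ≠ 0)
    (hle : ∀ᶠ x in 𝓝 a, ∀ᶠ i in l, f x ≤ r i * g x + ε i) :
    Tendsto r l (𝓝 (f' / g')) := by
  refine hs.tendsto_nhds_of_unique_mapClusterPt hr fun t _ ht ↦ ?_
  obtain ⟨u, hu, hrt⟩ := mapClusterPt_iff_ultrafilter.1 ht
  have hmin : IsLocalMin (fun x ↦ t * g x - f x) a := by
    filter_upwards [hle] with x hx
    have hlim : f x ≤ t * g x + 0 :=
      ge_of_tendsto ((hrt.mul_const (g x)).add (hε.mono_left hu)) (hu hx)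
    simpa [hfa, hga] using hlim
  have hderiv : t * g' - f' = 0 := hmin.hasDerivAt_eq_zero ((hg.const_mul t).sub hf)
  rw [eq_div_iff hg', sub_eq_zero.1 hderiv]

lemma tendsto_log_div_two_add_two_div_atTop :
    Tendsto (fun n : ℕ ↦ (Real.log n / 2 + 2) / n) atTop (𝓝 0) := by
  have h : Tendsto (fun n : ℕ ↦ Real.log n / n) atTop (𝓝 0) :=
    Real.isLittleO_log_id_atTop.tendsto_div_nhds_zero.comp tendsto_natCast_atTop_atTop
  simpa [add_div, div_right_comm _ (2 : ℝ)] using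
    (h.div_const 2).add (tendsto_const_div_atTop_nhds_zero_nat 2)

lemma hasDerivAt_log_exp_sub_one {x : ℝ} (hx : x ≠ 0) :
    HasDerivAt (fun y ↦ Real.log (Real.exp y - 1)) (Real.exp x / (Real.exp x - 1)) x :=
  ((Real.hasDerivAt_exp x).sub_const 1).log <| sub_ne_zero.2 <| Real.exp_eq_one_iff x |>.not.2 hx

theorem mode_ordered_stirling_asymptotic_general
    (M : ℕ → ℕ)
    (hmem : ∀ n, 1 ≤ n → M n ∈ Finset.Icc 1 n)
    (hmax : ∀ n, 1 ≤ n → ∀ k ∈ Finset.Icc 1 n, Surj n k ≤ Surj n (M n)) :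
    Tendsto (fun n : ℕ ↦ (M n : ℝ) / ((n : ℝ) / (2 * Real.log 2))) atTop (𝓝 1) := by
  have hL : 0 < Real.log 2 := Real.log_pos one_lt_two
  have hratio : ∀ᶠ n : ℕ in atTop, (M n / n : ℝ) ∈ Set.Icc 0 1 := by
    filter_upwards [eventually_ge_atTop 1] with n hn
    exact ⟨by positivity, div_le_one_of_le₀ (by exact_mod_cast (mem_Icc.1 (hmem n hn)).2)
      n.cast_nonneg⟩
  have hbound : ∀ᶠ x in 𝓝 (Real.log 2), ∀ᶠ n : ℕ in atTop, Real.log x - Real.log (Real.log 2) ≤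
      M n / n * Real.log (Real.exp x - 1) + (Real.log n / 2 + 2) / n := by
    filter_upwards [eventually_gt_nhds hL] with x hx
    filter_upwards [eventually_ne_atTop 0] with n hn
    exact log_sub_log_log_two_le_of_forall_Surj_le hn
      (Surj_le_of_forall_mem_Icc hn (hmax n (Nat.one_le_iff_ne_zero.2 hn))) hx
  have hderiv : HasDerivAt (fun x ↦ Real.log (Real.exp x - 1)) 2 (Real.log 2) := by
    convert hasDerivAt_log_exp_sub_one hL.ne' using 1
    norm_num [Real.exp_log]
  have hlim := tendsto_div_of_eventually_le_mul_add isCompact_Icc hratio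
    tendsto_log_div_two_add_two_div_atTop ((Real.hasDerivAt_log hL.ne').sub_const _) hderiv
    (sub_self _) (by norm_num [Real.exp_log]) two_ne_zero hbound
  convert hlim.mul_const (2 * Real.log 2) using 2 <;> field_simp

/-- The smallest mode `M n` of the sequence `Surj n 1, …, Surj n n` of
ordered Stirling numbers satisfies `M n ∼ n / (2 log 2)` as `n → ∞`. -/
theorem mode_ordered_stirling_asymptotic
    (M : ℕ → ℕ)
    (hmem : ∀ n, 1 ≤ n → M n ∈ Finset.Icc 1 n)
    (hmax : ∀ n, 1 ≤ n → ∀ k ∈ Finset.Icc 1 n, Surj n k ≤ Surj n (M n))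
    (hmin : ∀ n, 1 ≤ n → ∀ k ∈ Finset.Icc 1 n,
      (∀ j ∈ Finset.Icc 1 n, Surj n j ≤ Surj n k) → M n ≤ k) :
    Filter.Tendsto (fun n : ℕ => (M n : ℝ) / ((n : ℝ) / (2 * Real.log 2)))
      Filter.atTop (nhds 1) :=
  mode_ordered_stirling_asymptotic_general M hmem hmax
end

section
/- For every n ≥ 2 and every k with 2 ≤ k ≤ n - 1, the ordered Stirling numbers satisfy the strict log-concavity inequality Surj(n,k)^2 > Surj(n,k-1) · Surj(n,k+1). -/
/-!
Prepending a value to a function on `n` points gives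
`Surj (n + 1) (k + 1) = (k + 1) * (Surj n k + Surj n (k + 1))`.
Log-concavity survives both operations on the right, adding adjacent terms and multiplying by the
log-concave sequence `k + 1`, so it propagates from `n` to `n + 1`. Strictness comes from the
factor, because `(k + 1) * (k + 3) < (k + 2) ^ 2`.
-/

open Function Set

section LogConcave

variable {R : Type*} [CommSemiring R] [PartialOrder R]

/-- Log-concavity of a sequence of nonnegative terms, in the form "consecutive ratios decrease",
cleared of denominators. The usual condition `a k * a (k + 2) ≤ a (k + 1) ^ 2` is the case
`i = k`, `j = k + 1`; asking for all `i ≤ j` also excludes zeros between positive terms, which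
makes the notion stable under addition of adjacent terms. -/
def IsLogConcave (a : ℕ → R) : Prop :=
  ∀ ⦃i j : ℕ⦄, i ≤ j → a i * a (j + 1) ≤ a (i + 1) * a j

namespace IsLogConcave

variable {a b : ℕ → R}

theorem mul_le_sq (ha : IsLogConcave a) (k : ℕ) : a k * a (k + 2) ≤ a (k + 1) ^ 2 :=
  (ha k.le_succ).trans_eq (sq _).symm

theorem mul_add_two_le (ha : IsLogConcave a) {i j : ℕ} (hij : i ≤ j) :
    a i * a (j + 2) ≤ a (i + 2) * a j := by
  obtain rfl | hlt := hij.eq_or_lt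
  · exact (mul_comm _ _).le
  · exact (ha (hij.trans j.le_succ)).trans (ha hlt)

variable [IsOrderedRing R]

theorem of_succ (h_zero : a 0 = 0) (h_nonneg : ∀ k, 0 ≤ a k)
    (h_succ : IsLogConcave fun k => a (k + 1)) : IsLogConcave a := by
  rintro (_ | i) j hij
  · simpa only [h_zero, zero_mul] using mul_nonneg (h_nonneg 1) (h_nonneg j)
  · obtain ⟨j, rfl⟩ := Nat.exists_eq_add_of_le' (i.succ_pos.trans_le hij)
    exact h_succ (Nat.le_of_succ_le_succ hij)

theorem add_succ (ha : IsLogConcave a) : IsLogConcave fun k => a k + a (k + 1) := by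
  intro i j hij
  calc (a i + a (i + 1)) * (a (j + 1) + a (j + 2))
      = a i * a (j + 1) + a i * a (j + 2) + a (i + 1) * a (j + 1) + a (i + 1) * a (j + 2) := by
        ring
    _ ≤ a (i + 1) * a j + a (i + 2) * a j + a (i + 1) * a (j + 1) + a (i + 2) * a (j + 1) := by
        gcongr ?_ + ?_ + _ + ?_
        · exact ha hij
        · exact ha.mul_add_two_le hij
        · exact ha (Nat.succ_le_succ hij)
    _ = (a (i + 1) + a (i + 2)) * (a j + a (j + 1)) := by ring

theorem mul (ha : IsLogConcave a) (hb : IsLogConcave b) (ha_nonneg : ∀ k, 0 ≤ a k)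
    (hb_nonneg : ∀ k, 0 ≤ b k) : IsLogConcave fun k => a k * b k := by
  intro i j hij
  calc a i * b i * (a (j + 1) * b (j + 1))
      = a i * a (j + 1) * (b i * b (j + 1)) := mul_mul_mul_comm ..
    _ ≤ a (i + 1) * a j * (b (i + 1) * b j) :=
        mul_le_mul (ha hij) (hb hij) (mul_nonneg (hb_nonneg _) (hb_nonneg _))
          (mul_nonneg (ha_nonneg _) (ha_nonneg _))
    _ = a (i + 1) * b (i + 1) * (a j * b j) := mul_mul_mul_comm ..

end IsLogConcave

theorem IsLogConcave.mul_mul_mul_lt_sq [IsStrictOrderedRing R] {a : ℕ → R} (ha : IsLogConcave a)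
    {k : ℕ} (ha_pos : 0 < a (k + 1)) {x y z : R} (hxz_nonneg : 0 ≤ x * z) (hxz : x * z < y ^ 2) :
    x * a k * (z * a (k + 2)) < (y * a (k + 1)) ^ 2 := by
  calc x * a k * (z * a (k + 2))
      = x * z * (a k * a (k + 2)) := mul_mul_mul_comm ..
    _ ≤ x * z * a (k + 1) ^ 2 := mul_le_mul_of_nonneg_left (ha.mul_le_sq k) hxz_nonneg
    _ < y ^ 2 * a (k + 1) ^ 2 := mul_lt_mul_of_pos_right hxz (pow_pos ha_pos 2)
    _ = (y * a (k + 1)) ^ 2 := (mul_pow ..).symm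

theorem isLogConcave_add_one : IsLogConcave fun k : ℕ => k + 1 := by
  intro i j hij
  linarith

end LogConcave

section Surjections

variable {α β : Type*}

theorem insert_eq_univ_iff {c : β} {s : Set β} : insert c s = univ ↔ s = {c}ᶜ ∨ s = univ := by
  have h_coatom : IsCoatom ({c}ᶜ : Set β) := isCoatom_compl.2 (isAtom_singleton c)
  rw [or_comm, ← top_eq_univ, ← h_coatom.le_iff, insert_eq]
  exact codisjoint_iff.symm.trans codisjoint_iff_compl_le_right

theorem surjective_cons_iff {n : ℕ} {c : β} {g : Fin n → β} :
    Surjective (Fin.cons c g : Fin (n + 1) → β) ↔ range g = {c}ᶜ ∨ range g = univ := by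
  rw [← range_eq_univ, Fin.range_cons, insert_eq_univ_iff]

theorem natCard_surjective [Finite α] [Finite β] :
    Nat.card {f : α → β // Surjective f} = Surj (Nat.card α) (Nat.card β) := by
  rw [Surj, ← Nat.card_eq_fintype_card]
  refine Nat.card_congr
    (((Finite.equivFin α).arrowCongr (Finite.equivFin β)).subtypeEquiv fun f => ?_)
  simp [Equiv.arrowCongr]

/-- Functions with range `s` correspond to surjections onto `s`, by restricting the codomain; this
reduces counting functions with a prescribed range to counting surjections. -/
def rangeEqEquivSurjective (s : Set β) :
    {f : α → β // range f = s} ≃ {g : α → s // Surjective g} where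
  toFun := fun ⟨f, hf⟩ => ⟨codRestrict f s (range_subset_iff.1 hf.le), by
    subst hf
    exact codRestrict_range_surjective f⟩
  invFun := fun ⟨g, hg⟩ => ⟨(↑) ∘ g, by rw [hg.range_comp, Subtype.range_coe]⟩
  left_inv _ := rfl
  right_inv _ := rfl

theorem ncard_range_eq [Finite α] (s : Set β) [Finite s] :
    {f : α → β | range f = s}.ncard = Surj (Nat.card α) s.ncard :=
  (Nat.card_congr (rangeEqEquivSurjective s)).trans natCard_surjective

theorem natCard_surjective_cons {n k : ℕ} (c : Fin (k + 1)) :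
    Nat.card {g : Fin n → Fin (k + 1) // Surjective (Fin.cons c g : Fin (n + 1) → Fin (k + 1))} =
      Surj n k + Surj n (k + 1) := by
  have h_disj : Disjoint {g : Fin n → Fin (k + 1) | range g = {c}ᶜ} {g | range g = univ} :=
    disjoint_left.2 fun _ hc hu => compl_ne_univ.2 (singleton_nonempty c) (hc.symm.trans hu)
  have h_card : ({c}ᶜ : Set (Fin (k + 1))).ncard = k :=
    ncard_compl_of_ncard_eq_add _ (by rw [Nat.card_fin, ncard_singleton])
  calc _ = ({g : Fin n → Fin (k + 1) | range g = {c}ᶜ} ∪ {g | range g = univ}).ncard := by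
        simp only [surjective_cons_iff]
        rfl
    _ = Surj n k + Surj n (k + 1) := by
        rw [ncard_union_eq h_disj, ncard_range_eq, ncard_range_eq, h_card, ncard_univ,
          Nat.card_fin, Nat.card_fin]

end Surjections

theorem surj_succ_succ (n k : ℕ) :
    Surj (n + 1) (k + 1) = (k + 1) * (Surj n k + Surj n (k + 1)) := by
  let headTailEquiv : {f : Fin (n + 1) → Fin (k + 1) // Surjective f} ≃
      Σ c, {g : Fin n → Fin (k + 1) // Surjective (Fin.cons c g : Fin (n + 1) → Fin (k + 1))} :=
    ((Fin.consEquiv _).subtypeEquiv fun _ => Iff.rfl).symm.trans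
      (Equiv.subtypeProdEquivSigmaSubtype fun c g => Surjective (Fin.cons c g))
  rw [Surj, ← Nat.card_eq_fintype_card, Nat.card_congr headTailEquiv, Nat.card_sigma]
  simp only [natCard_surjective_cons, Finset.sum_const, Finset.card_univ, Fintype.card_fin,
    smul_eq_mul]

theorem surj_succ_zero (n : ℕ) : Surj (n + 1) 0 = 0 := by
  simp [Surj]

theorem surj_zero_succ (k : ℕ) : Surj 0 (k + 1) = 0 := by
  simp [Surj, Surjective]

theorem surj_pos {n k : ℕ} (hk : 0 < k) (hkn : k ≤ n) : 0 < Surj n k := by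
  have : NeZero k := ⟨hk.ne'⟩
  exact Fintype.card_pos_iff.2
    ⟨invFun (Fin.castLE hkn), invFun_surjective (Fin.castLE_injective hkn)⟩

theorem isLogConcave_surj (n : ℕ) : IsLogConcave (Surj n) := by
  induction n with
  | zero =>
    intro i j _
    simp only [surj_zero_succ, mul_zero, zero_mul, le_refl]
  | succ n ih =>
    refine .of_succ (surj_succ_zero n) (fun _ => Nat.zero_le _) ?_
    simp only [surj_succ_succ]
    exact isLogConcave_add_one.mul ih.add_succ (fun _ => Nat.zero_le _) fun _ => Nat.zero_le _

/-- The ordered Stirling numbers are strictly log-concave: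
for `n ≥ 2` and `2 ≤ k ≤ n - 1` we have
`Surj(n,k)² > Surj(n,k-1) · Surj(n,k+1)`. -/
theorem ordered_stirling_strict_log_concave
    (n k : ℕ) (hn : 2 ≤ n) (hk : 2 ≤ k) (hkn : k ≤ n - 1) :
    Surj n (k - 1) * Surj n (k + 1) < Surj n k ^ 2 := by
  obtain ⟨n, rfl⟩ := Nat.exists_eq_add_of_le' (one_le_two.trans hn)
  obtain ⟨k, rfl⟩ := Nat.exists_eq_add_of_le' hk
  have h_pos : 0 < Surj n (k + 1) + Surj n (k + 2) :=
    Nat.add_pos_left (surj_pos k.succ_pos (by omega)) _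
  have h_weights : (k + 1) * (k + 2 + 1) < (k + 1 + 1) ^ 2 := by linarith
  rw [show k + 2 - 1 = k + 1 from rfl, surj_succ_succ, surj_succ_succ, surj_succ_succ]
  exact (isLogConcave_surj n).add_succ.mul_mul_mul_lt_sq h_pos (Nat.zero_le _) h_weights
end

section
/- (Darroch) Let a_0, a_1, ..., a_n be nonnegative real numbers such that the polynomial p(x) = a_0 + a_1 x + ... + a_n x^n has only real zeros (every complex root of p is real) and p(1) > 0. Then the sequence (a_k) is unimodal, and every index M ∈ {0, ..., n} at which a_M is maximal satisfies |M - p'(1)/p(1)| < 1. -/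
open Polynomial

/-!
If all roots of `p` are real they are nonpositive, so `p / p(1)` is a product of factors
`(1 - tᵢ) + tᵢ x` with `tᵢ ∈ [0, 1]`: the generating function of a sum of independent Bernoulli
variables, with mean `μ = ∑ tᵢ = p'(1) / p(1)`.

Multiplication by `q + r x` with `q, r ≥ 0` preserves the property that no positive coefficient
comes after a negative one. Since `1 - x` has this property, so does `(1 - x) p`, whose
coefficients are the increments of `a`: this is unimodality.

For the mode, normalize to `p(1) = 1` and let `dᵢ` be `p` without its `i`-th factor. Taking
coefficients of `xʲ` in the identities
`∑ tᵢ (1 - x) dᵢ = (1 - x) p'` and `∑ tᵢ (1 - tᵢ) (1 - x) dᵢ = μ p - x p'`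
gives `(j + 1) aⱼ₊₁ - j aⱼ` and `(μ - j) aⱼ`. If `aⱼ ≤ aⱼ₊₁`, unimodality of `dᵢ` makes all terms
of both sums nonnegative, and the first sum is positive as soon as `aⱼ₊₁ > 0`. A positive term with
`tᵢ < 1` is positive in the second sum too, whence `j < μ`; one with `tᵢ = 1` has the factor `x`,
and removing it lowers both `j` and `μ` by one. So a mode is less than `μ + 1`. The lower bound
follows by reversing the coefficients, which exchanges `tᵢ` and `1 - tᵢ`.
-/

section Coefficients

variable {R : Type*} [CommRing R]

lemma coeff_one_sub_X_mul_succ (p : R[X]) (k : ℕ) :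
    ((1 - X) * p).coeff (k + 1) = p.coeff (k + 1) - p.coeff k := by
  simp [sub_mul]

lemma coeff_linear_mul_zero (q r : R) (p : R[X]) :
    ((C q + C r * X) * p).coeff 0 = q * p.coeff 0 := by
  simp [add_mul, mul_assoc]

lemma coeff_linear_mul_succ (q r : R) (p : R[X]) (k : ℕ) :
    ((C q + C r * X) * p).coeff (k + 1) = q * p.coeff (k + 1) + r * p.coeff k := by
  simp [add_mul, mul_assoc]

end Coefficients

section SingleCrossing

/-- A sequence whose sign changes at most once, from positive to negative. It is applied to the
increments of a sequence `a`, where it expresses that `a` is unimodal. -/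
def IsSingleCrossing {R : Type*} [Zero R] [Preorder R] (a : ℕ → R) : Prop :=
  ∀ ⦃i j⦄, i ≤ j → a i < 0 → a j ≤ 0

variable {R : Type*} [CommRing R] [LinearOrder R] [IsStrictOrderedRing R]

lemma isSingleCrossing_coeff_one_sub_X : IsSingleCrossing (1 - X : R[X]).coeff := by
  have hsucc : ∀ k, (1 - X : R[X]).coeff (k + 1) ≤ 0 := fun k => by
    simp only [coeff_sub, coeff_one, coeff_X, Nat.add_eq_zero_iff, one_ne_zero, and_false,
      if_false, zero_sub]
    split_ifs <;> simp
  rintro i (_ | j) hij hi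
  · exact (Nat.le_zero.1 hij ▸ hi).le
  · exact hsucc j

namespace IsSingleCrossing

lemma coeff_linear_mul {p : R[X]} (hp : IsSingleCrossing p.coeff) {q r : R} (hq : 0 ≤ q)
    (hr : 0 ≤ r) : IsSingleCrossing ((C q + C r * X) * p).coeff := by
  rintro i (_ | j) hij hi
  · obtain rfl := Nat.le_zero.1 hij
    exact hi.le
  have hcoeff : p.coeff (j + 1) ≤ 0 ∧ p.coeff j ≤ 0 ∨ i = j + 1 := by
    cases i with
    | zero =>
      rw [coeff_linear_mul_zero] at hi
      have h0 : p.coeff 0 < 0 := neg_of_mul_neg_right hi hq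
      exact .inl ⟨hp (Nat.zero_le _) h0, hp (Nat.zero_le _) h0⟩
    | succ i =>
      rw [coeff_linear_mul_succ] at hi
      rcases hij.eq_or_lt with h | h
      · exact .inr h
      rcases lt_or_ge (p.coeff i) 0 with h0 | h0
      · exact .inl ⟨hp (by omega) h0, hp (by omega) h0⟩
      · have h1 : p.coeff (i + 1) < 0 :=
          neg_of_mul_neg_right (by linarith [mul_nonneg hr h0]) hq
        exact .inl ⟨hp (by omega) h1, hp (by omega) h1⟩
  rcases hcoeff with ⟨h1, h0⟩ | rfl
  · rw [coeff_linear_mul_succ]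
    exact add_nonpos (mul_nonpos_of_nonneg_of_nonpos hq h1) (mul_nonpos_of_nonneg_of_nonpos hr h0)
  · exact hi.le

lemma antitoneOn_of_coeff_succ_lt {p : R[X]} (hp : IsSingleCrossing ((1 - X) * p).coeff) {k : ℕ}
    (hk : p.coeff (k + 1) < p.coeff k) : AntitoneOn p.coeff (Set.Ici k) := by
  refine antitoneOn_of_succ_le Set.ordConnected_Ici fun i _ hi _ => ?_
  have := hp (Nat.succ_le_succ (Set.mem_Ici.1 hi))
    (by rw [coeff_one_sub_X_mul_succ]; exact sub_neg.2 hk)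
  rwa [coeff_one_sub_X_mul_succ, sub_nonpos] at this

lemma monotoneOn_Iic_of_forall_le {p : R[X]} (hp : IsSingleCrossing ((1 - X) * p).coeff) {m : ℕ}
    (hm : ∀ k, p.coeff k ≤ p.coeff m) : MonotoneOn p.coeff (Set.Iic m) := by
  refine monotoneOn_of_le_succ Set.ordConnected_Iic fun i _ _ him => ?_
  by_contra! hlt
  have hle : p.coeff m ≤ p.coeff (i + 1) := hp.antitoneOn_of_coeff_succ_lt hlt
    (Set.mem_Ici.2 i.le_succ) (Set.mem_Ici.2 (i.le_succ.trans him)) him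
  exact ((hm i).trans hle).not_gt hlt

lemma antitoneOn_Ici_of_forall_le {p : R[X]} (hp : IsSingleCrossing ((1 - X) * p).coeff) {m : ℕ}
    (hm : ∀ k, p.coeff k ≤ p.coeff m) : AntitoneOn p.coeff (Set.Ici m) := by
  refine antitoneOn_of_succ_le Set.ordConnected_Ici fun i _ hmi _ => ?_
  by_contra! hlt
  have hmono : MonotoneOn p.coeff (Set.Iic (i + 1)) := by
    refine monotoneOn_of_le_succ Set.ordConnected_Iic fun k _ _ hk => ?_
    by_contra! hlt'
    have hki : k ≤ i := Nat.succ_le_succ_iff.1 hk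
    exact (hp.antitoneOn_of_coeff_succ_lt hlt' hki (hki.trans i.le_succ) i.le_succ).not_gt hlt
  exact ((hm (i + 1)).trans (hmono (hmi.trans i.le_succ) i.le_succ hmi)).not_gt hlt

end IsSingleCrossing

end SingleCrossing

section PoissonBinomial

variable {ι R : Type*} [CommRing R]

/-- The probability generating function of a Poisson binomial distribution, that is, of a sum of
independent Bernoulli variables with success probabilities `t i` for `i ∈ s`. The constraint
`0 ≤ t i ≤ 1` is left to the lemmas that need it. -/
noncomputable def poissonBinomial (s : Finset ι) (t : ι → R) : R[X] :=
  ∏ i ∈ s, (C (1 - t i) + C (t i) * X)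

lemma poissonBinomial_cons {s : Finset ι} (t : ι → R) {i : ι} (hi : i ∉ s) :
    poissonBinomial (Finset.cons i s hi) t =
      (C (1 - t i) + C (t i) * X) * poissonBinomial s t :=
  Finset.prod_cons hi

lemma eval_one_poissonBinomial (s : Finset ι) (t : ι → R) : (poissonBinomial s t).eval 1 = 1 := by
  simp [poissonBinomial, eval_prod]

lemma natDegree_poissonBinomial_le (s : Finset ι) (t : ι → R) :
    (poissonBinomial s t).natDegree ≤ s.card := by
  refine (natDegree_prod_le _ _).trans ((Finset.sum_le_card_nsmul _ _ 1 fun i _ => ?_).trans_eq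
    (by simp))
  rw [add_comm]
  exact natDegree_linear_le

lemma reflect_poissonBinomial (s : Finset ι) (t : ι → R) :
    (poissonBinomial s t).reflect s.card = poissonBinomial s (1 - t) := by
  induction s using Finset.cons_induction with
  | empty => simp [poissonBinomial]
  | cons i s hi ih =>
    have hdeg : (C (1 - t i) + C (t i) * X).natDegree ≤ 1 := by
      rw [add_comm]
      exact natDegree_linear_le
    have hfactor : (C (1 - t i) + C (t i) * X).reflect 1 =
        C (1 - (1 - t) i) + C ((1 - t) i) * X := by
      rw [reflect_add, reflect_C, reflect_C_mul, reflect_one_X, pow_one, mul_one, Pi.sub_apply,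
        Pi.one_apply, sub_sub_cancel, add_comm]
    rw [poissonBinomial_cons, poissonBinomial_cons, Finset.card_cons, add_comm s.card,
      reflect_mul _ _ hdeg (natDegree_poissonBinomial_le s t), hfactor, ih]

lemma eval_one_derivative_poissonBinomial (s : Finset ι) (t : ι → R) :
    (derivative (poissonBinomial s t)).eval 1 = ∑ i ∈ s, t i := by
  classical
  rw [poissonBinomial, derivative_prod_finset, eval_finsetSum]
  simp [eval_prod]

variable [DecidableEq ι]

lemma linear_mul_poissonBinomial_erase {s : Finset ι} (t : ι → R) {i : ι} (hi : i ∈ s) :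
    (C (1 - t i) + C (t i) * X) * poissonBinomial (s.erase i) t = poissonBinomial s t :=
  Finset.mul_prod_erase s _ hi

lemma derivative_poissonBinomial (s : Finset ι) (t : ι → R) :
    derivative (poissonBinomial s t) = ∑ i ∈ s, C (t i) * poissonBinomial (s.erase i) t := by
  rw [poissonBinomial, derivative_prod_finset]
  refine Finset.sum_congr rfl fun i _ => ?_
  rw [← poissonBinomial, mul_comm]
  simp

lemma sum_mul_coeff_one_sub_X_mul_erase (s : Finset ι) (t : ι → R) (j : ℕ) :
    ∑ i ∈ s, t i * ((1 - X) * poissonBinomial (s.erase i) t).coeff j =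
      (j + 1) * (poissonBinomial s t).coeff (j + 1) - j * (poissonBinomial s t).coeff j := by
  have hpoly : ∑ i ∈ s, C (t i) * ((1 - X) * poissonBinomial (s.erase i) t) =
      (1 - X) * derivative (poissonBinomial s t) := by
    rw [derivative_poissonBinomial, Finset.mul_sum]
    exact Finset.sum_congr rfl fun i _ => mul_left_comm _ _ _
  have hcoeff := congrArg (coeff · j) hpoly
  simp only [finsetSum_coeff, coeff_C_mul] at hcoeff
  rw [hcoeff]
  cases j with
  | zero => simp [coeff_derivative]
  | succ j =>
    rw [coeff_one_sub_X_mul_succ, coeff_derivative, coeff_derivative]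
    push_cast
    ring

lemma sum_mul_one_sub_mul_coeff_one_sub_X_mul_erase (s : Finset ι) (t : ι → R) (j : ℕ) :
    ∑ i ∈ s, t i * (1 - t i) * ((1 - X) * poissonBinomial (s.erase i) t).coeff j =
      (∑ i ∈ s, t i - j) * (poissonBinomial s t).coeff j := by
  have hpoly : ∑ i ∈ s, C (t i * (1 - t i)) * ((1 - X) * poissonBinomial (s.erase i) t) =
      C (∑ i ∈ s, t i) * poissonBinomial s t - X * derivative (poissonBinomial s t) := by
    rw [derivative_poissonBinomial, map_sum, Finset.sum_mul, Finset.mul_sum,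
      ← Finset.sum_sub_distrib]
    refine Finset.sum_congr rfl fun i hi => ?_
    rw [← linear_mul_poissonBinomial_erase t hi, C_mul, C_sub, C_1]
    ring
  have hcoeff := congrArg (coeff · j) hpoly
  simp only [finsetSum_coeff, coeff_C_mul, coeff_sub] at hcoeff
  rw [hcoeff, sub_mul]
  congr 1
  cases j with
  | zero => simp
  | succ j => rw [coeff_X_mul, coeff_derivative]; push_cast; ring

end PoissonBinomial

section Mode

variable {ι R : Type*} [CommRing R] [LinearOrder R] [IsStrictOrderedRing R]
  {s : Finset ι} {t : ι → R}

lemma poissonBinomial_coeff_nonneg (ht : ∀ i ∈ s, t i ∈ Set.Icc 0 1) (k : ℕ) :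
    0 ≤ (poissonBinomial s t).coeff k := by
  induction s using Finset.cons_induction generalizing k with
  | empty => rw [poissonBinomial, Finset.prod_empty, coeff_one]; split_ifs <;> simp
  | cons i s hi ih =>
    obtain ⟨⟨h0, h1⟩, hs⟩ := Finset.forall_mem_cons hi _ |>.1 ht
    rw [poissonBinomial_cons]
    cases k with
    | zero => rw [coeff_linear_mul_zero]; exact mul_nonneg (sub_nonneg.2 h1) (ih hs 0)
    | succ k =>
      rw [coeff_linear_mul_succ]
      exact add_nonneg (mul_nonneg (sub_nonneg.2 h1) (ih hs _)) (mul_nonneg h0 (ih hs _))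

lemma isSingleCrossing_coeff_one_sub_X_mul_poissonBinomial (ht : ∀ i ∈ s, t i ∈ Set.Icc 0 1) :
    IsSingleCrossing ((1 - X) * poissonBinomial s t).coeff := by
  induction s using Finset.cons_induction with
  | empty => simpa [poissonBinomial] using isSingleCrossing_coeff_one_sub_X
  | cons i s hi ih =>
    obtain ⟨⟨h0, h1⟩, hs⟩ := Finset.forall_mem_cons hi _ |>.1 ht
    rw [poissonBinomial_cons, mul_left_comm]
    exact (ih hs).coeff_linear_mul (sub_nonneg.2 h1) h0

lemma mul_coeff_one_sub_X_mul_erase_nonneg [DecidableEq ι] (ht : ∀ i ∈ s, t i ∈ Set.Icc 0 1)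
    {j : ℕ} (hj : (poissonBinomial s t).coeff j ≤ (poissonBinomial s t).coeff (j + 1))
    {i : ι} (hi : i ∈ s) :
    0 ≤ t i * ((1 - X) * poissonBinomial (s.erase i) t).coeff j := by
  obtain ⟨h0, h1⟩ := ht i hi
  set d := (1 - X) * poissonBinomial (s.erase i) t
  rcases le_or_gt 0 (d.coeff j) with hd | hd
  · exact mul_nonneg h0 hd
  have hd' : d.coeff (j + 1) ≤ 0 := isSingleCrossing_coeff_one_sub_X_mul_poissonBinomial
    (fun l hl => ht l (Finset.mem_of_mem_erase hl)) j.le_succ hd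
  have hstep : 0 ≤ (1 - t i) * d.coeff (j + 1) + t i * d.coeff j := by
    rw [← coeff_linear_mul_succ, mul_left_comm, linear_mul_poissonBinomial_erase t hi,
      coeff_one_sub_X_mul_succ]
    exact sub_nonneg.2 hj
  linarith [mul_nonpos_of_nonneg_of_nonpos (sub_nonneg.2 h1) hd']

lemma lt_sum_of_coeff_le_succ (ht : ∀ i ∈ s, t i ∈ Set.Icc 0 1) {j : ℕ}
    (hj : (poissonBinomial s t).coeff j ≤ (poissonBinomial s t).coeff (j + 1))
    (hpos : 0 < (poissonBinomial s t).coeff (j + 1)) :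
    (j : R) < ∑ i ∈ s, t i := by
  classical
  induction s using Finset.strongInduction generalizing j with
  | H s ih =>
    have hterm := fun i (hi : i ∈ s) => mul_coeff_one_sub_X_mul_erase_nonneg ht hj hi
    obtain ⟨i, hi, hipos⟩ : ∃ i ∈ s,
        0 < t i * ((1 - X) * poissonBinomial (s.erase i) t).coeff j := by
      refine Finset.exists_lt_of_sum_lt (f := fun _ => 0) ?_
      rw [Finset.sum_const_zero, sum_mul_coeff_one_sub_X_mul_erase]
      linarith [mul_le_mul_of_nonneg_left hj (Nat.cast_nonneg (α := R) j)]
    rcases (ht i hi).2.eq_or_lt with h1 | h1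
    · have ht' : ∀ l ∈ s.erase i, t l ∈ Set.Icc 0 1 := fun l hl => ht l (Finset.mem_of_mem_erase hl)
      rw [h1, one_mul] at hipos
      rw [← Finset.add_sum_erase s t hi, h1]
      cases j with
      | zero =>
        rw [Nat.cast_zero]
        exact add_pos_of_pos_of_nonneg one_pos (Finset.sum_nonneg fun l hl => (ht' l hl).1)
      | succ k =>
        rw [coeff_one_sub_X_mul_succ, sub_pos] at hipos
        have hk := ih _ (Finset.erase_ssubset hi) ht' hipos.le
          ((poissonBinomial_coeff_nonneg ht' k).trans_lt hipos)
        push_cast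
        linarith
    · have hprod : 0 < (∑ l ∈ s, t l - j) * (poissonBinomial s t).coeff j := by
        rw [← sum_mul_one_sub_mul_coeff_one_sub_X_mul_erase]
        simp only [mul_right_comm _ (1 - t _)]
        exact Finset.sum_pos' (fun l hl => mul_nonneg (hterm l hl) (sub_nonneg.2 (ht l hl).2))
          ⟨i, hi, mul_pos hipos (sub_pos.2 h1)⟩
      exact sub_pos.1 (pos_of_mul_pos_left hprod (poissonBinomial_coeff_nonneg ht j))

lemma mode_lt_sum_add_one (ht : ∀ i ∈ s, t i ∈ Set.Icc 0 1) {M : ℕ}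
    (hM : ∀ k, (poissonBinomial s t).coeff k ≤ (poissonBinomial s t).coeff M)
    (hpos : 0 < (poissonBinomial s t).coeff M) :
    (M : R) < ∑ i ∈ s, t i + 1 := by
  cases M with
  | zero =>
    rw [Nat.cast_zero]
    exact add_pos_of_nonneg_of_pos (Finset.sum_nonneg fun i hi => (ht i hi).1) one_pos
  | succ j =>
    push_cast
    exact add_lt_add_left (lt_sum_of_coeff_le_succ ht (hM j) hpos) 1

lemma abs_mode_sub_sum_lt_one (ht : ∀ i ∈ s, t i ∈ Set.Icc 0 1) {M : ℕ}
    (hM : ∀ k, (poissonBinomial s t).coeff k ≤ (poissonBinomial s t).coeff M)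
    (hpos : 0 < (poissonBinomial s t).coeff M) :
    |(M : R) - ∑ i ∈ s, t i| < 1 := by
  have hcard : M ≤ s.card :=
    (le_natDegree_of_ne_zero hpos.ne').trans (natDegree_poissonBinomial_le s t)
  have hcoeff : ∀ k, (poissonBinomial s (1 - t)).coeff k =
      (poissonBinomial s t).coeff (revAt s.card k) := fun k => by
    rw [← reflect_poissonBinomial, coeff_reflect]
  have hcoeffM : (poissonBinomial s (1 - t)).coeff (s.card - M) =
      (poissonBinomial s t).coeff M := by
    rw [hcoeff, revAt_le (Nat.sub_le _ _), Nat.sub_sub_self hcard]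
  have hupper := mode_lt_sum_add_one ht hM hpos
  have hlower : ((s.card - M : ℕ) : R) < ∑ i ∈ s, (1 - t) i + 1 :=
    mode_lt_sum_add_one (t := 1 - t)
      (fun i hi => ⟨sub_nonneg.2 (ht i hi).2, sub_le_self 1 (ht i hi).1⟩)
      (fun k => by rw [hcoeffM, hcoeff]; exact hM _) (hcoeffM ▸ hpos)
  simp only [Nat.cast_sub hcard, Pi.sub_apply, Pi.one_apply, Finset.sum_sub_distrib,
    Finset.sum_const, nsmul_one] at hlower
  rw [abs_lt]
  constructor <;> linarith

end Mode

section RealRooted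

lemma eq_C_mul_poissonBinomial_of_splits {K : Type*} [Field K] [DecidableEq K] {p : K[X]}
    (hp : p.Splits) (h1 : p.eval 1 ≠ 0) :
    p = C (p.eval 1) * poissonBinomial Finset.univ fun r : p.roots => (1 - (r : K))⁻¹ := by
  have hfactor : ∀ r ∈ p.roots, X - C r = C (1 - r) * (C (1 - (1 - r)⁻¹) + C (1 - r)⁻¹ * X) := by
    intro r hr
    have hr1 : 1 - r ≠ 0 := by
      intro h
      rw [← sub_eq_zero.1 h] at hr
      exact h1 (isRoot_of_mem_roots hr)
    rw [mul_add, ← mul_assoc, ← C_mul, ← C_mul, mul_sub, mul_inv_cancel₀ hr1]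
    simp only [mul_one, C_sub, C_1]
    ring
  have hprod : poissonBinomial Finset.univ (fun r : p.roots => (1 - (r : K))⁻¹) =
      (p.roots.map fun r => C (1 - (1 - r)⁻¹) + C (1 - r)⁻¹ * X).prod := by
    rw [← Multiset.map_univ]
    rfl
  have hlead : p.eval 1 = p.leadingCoeff * (p.roots.map (1 - ·)).prod := hp.eval_eq_prod_roots 1
  conv_lhs => rw [hp.eq_prod_roots, Multiset.map_congr rfl hfactor, Multiset.prod_map_mul]
  rw [hprod, hlead, C_mul, map_multiset_prod, Multiset.map_map, mul_assoc]
  rfl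

variable {K : Type*} [Field K] [LinearOrder K] [IsStrictOrderedRing K] {p : K[X]}

lemma nonpos_of_mem_roots_of_coeff_nonneg (hcoeff : ∀ k, 0 ≤ p.coeff k) {r : K}
    (hr : r ∈ p.roots) : r ≤ 0 := by
  by_contra! hr0
  have hroot : p.eval r = 0 := isRoot_of_mem_roots hr
  rw [eval_eq_sum_range, Finset.sum_eq_zero_iff_of_nonneg
    fun k _ => mul_nonneg (hcoeff k) (pow_pos hr0 k).le] at hroot
  have hlead := hroot p.natDegree (Finset.self_mem_range_succ _)
  rw [mul_eq_zero, coeff_natDegree, leadingCoeff_eq_zero] at hlead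
  exact hlead.elim (ne_zero_of_mem_roots hr) (pow_pos hr0 _).ne'

lemma inv_one_sub_mem_Icc_of_mem_roots (hcoeff : ∀ k, 0 ≤ p.coeff k) {r : K} (hr : r ∈ p.roots) :
    (1 - r)⁻¹ ∈ Set.Icc 0 1 := by
  have h1 : 1 ≤ 1 - r := by linarith [nonpos_of_mem_roots_of_coeff_nonneg hcoeff hr]
  exact ⟨inv_nonneg.2 (zero_le_one.trans h1), inv_le_one_of_one_le₀ h1⟩

lemma isSingleCrossing_coeff_one_sub_X_mul_of_splits (hp : p.Splits)
    (hcoeff : ∀ k, 0 ≤ p.coeff k) (hpos : 0 < p.eval 1) :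
    IsSingleCrossing ((1 - X) * p).coeff := by
  have h := isSingleCrossing_coeff_one_sub_X_mul_poissonBinomial
    (s := Finset.univ) (t := fun r : p.roots => (1 - (r : K))⁻¹)
    fun r _ => inv_one_sub_mem_Icc_of_mem_roots hcoeff (Multiset.coe_mem)
  have hscale := h.coeff_linear_mul hpos.le le_rfl
  rwa [C_0, zero_mul, add_zero, mul_left_comm,
    ← eq_C_mul_poissonBinomial_of_splits hp hpos.ne'] at hscale

lemma abs_mode_sub_derivative_div_lt_one_of_splits (hp : p.Splits) (hcoeff : ∀ k, 0 ≤ p.coeff k)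
    (hpos : 0 < p.eval 1) {M : ℕ} (hM : ∀ k, p.coeff k ≤ p.coeff M) :
    |(M : K) - (derivative p).eval 1 / p.eval 1| < 1 := by
  set t : p.roots → K := fun r => (1 - (r : K))⁻¹
  have hpt : p = C (p.eval 1) * poissonBinomial Finset.univ t :=
    eq_C_mul_poissonBinomial_of_splits hp hpos.ne'
  have hcoeff_t : ∀ k, p.coeff k = p.eval 1 * (poissonBinomial Finset.univ t).coeff k := fun k => by
    rw [← coeff_C_mul, ← hpt]
  have hMpos : 0 < p.coeff M := by
    by_contra! h
    have hzero : p = 0 := by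
      ext k
      exact le_antisymm ((hM k).trans h) (hcoeff k)
    simp [hzero] at hpos
  have hmean : (derivative p).eval 1 / p.eval 1 = ∑ r, t r := by
    have hderiv := congrArg (fun q => (derivative q).eval 1) hpt
    simp only [derivative_C_mul, eval_mul, eval_C, eval_one_derivative_poissonBinomial] at hderiv
    rw [hderiv, mul_div_cancel_left₀ _ hpos.ne']
  rw [hmean]
  refine abs_mode_sub_sum_lt_one
    (fun r _ => inv_one_sub_mem_Icc_of_mem_roots hcoeff (Multiset.coe_mem)) (fun k => ?_) ?_
  · exact le_of_mul_le_mul_left (by simpa only [hcoeff_t] using hM k) hpos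
  · exact pos_of_mul_pos_right (hcoeff_t M ▸ hMpos) hpos.le

lemma splits_of_forall_im_eq_zero {p : ℝ[X]}
    (hreal : ∀ z : ℂ, (p.map (algebraMap ℝ ℂ)).eval z = 0 → z.im = 0) : p.Splits :=
  Splits.of_splits_map (algebraMap ℝ ℂ) (IsAlgClosed.splits _) fun z hz =>
    ⟨z.re, Complex.ext rfl (hreal z (isRoot_of_mem_roots hz)).symm⟩

end RealRooted

/-- (Darroch) If `a 0, …, a n` are nonnegative reals such that the polynomial
`p(x) = a 0 + a 1 x + ⋯ + a n xⁿ` has only real zeros and `p(1) > 0`, then the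
sequence is unimodal, and every index `M ≤ n` at which `a M` is maximal satisfies
`|M - p'(1)/p(1)| < 1`. -/
theorem darroch
    (n : ℕ) (a : ℕ → ℝ) (ha : ∀ k ≤ n, 0 ≤ a k)
    (p : Polynomial ℝ)
    (hp : p = ∑ k ∈ Finset.range (n + 1), Polynomial.C (a k) * Polynomial.X ^ k)
    (hreal : ∀ z : ℂ, (p.map (algebraMap ℝ ℂ)).eval z = 0 → z.im = 0)
    (hpos : 0 < p.eval 1) :
    (∃ m ≤ n, (∀ i j, i ≤ j → j ≤ m → a i ≤ a j) ∧
      (∀ i j, m ≤ i → i ≤ j → j ≤ n → a j ≤ a i)) ∧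
    (∀ M ≤ n, (∀ k ≤ n, a k ≤ a M) →
      |(M : ℝ) - (Polynomial.derivative p).eval 1 / p.eval 1| < 1) := by
  have hcoeff : ∀ k, p.coeff k = if k ≤ n then a k else 0 := fun k => by
    simp [hp, finsetSum_coeff]
  have hcoeff_le : ∀ k ≤ n, p.coeff k = a k := fun k hk => by rw [hcoeff, if_pos hk]
  have hnonneg : ∀ k, 0 ≤ p.coeff k := fun k => by
    rw [hcoeff]; split_ifs with hk; exacts [ha k hk, le_rfl]
  have hmode : ∀ M ≤ n, (∀ k ≤ n, a k ≤ a M) → ∀ k, p.coeff k ≤ p.coeff M := fun M hM hmax k => by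
    rw [hcoeff_le M hM, hcoeff]; split_ifs with hk; exacts [hmax k hk, ha M hM]
  have hsplits : p.Splits := splits_of_forall_im_eq_zero hreal
  refine ⟨?_, fun M hM hmax =>
    abs_mode_sub_derivative_div_lt_one_of_splits hsplits hnonneg hpos (hmode M hM hmax)⟩
  have hcross := isSingleCrossing_coeff_one_sub_X_mul_of_splits hsplits hnonneg hpos
  obtain ⟨m, hm, hmax⟩ := (Finset.Iic n).exists_max_image a ⟨n, Finset.mem_Iic.2 le_rfl⟩
  simp only [Finset.mem_Iic] at hm hmax
  refine ⟨m, hm, fun i j hij hjm => ?_, fun i j hmi hij hjn => ?_⟩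
  · rw [← hcoeff_le i (by omega), ← hcoeff_le j (by omega)]
    exact hcross.monotoneOn_Iic_of_forall_le (hmode m hm hmax) (hij.trans hjm) hjm hij
  · rw [← hcoeff_le i (by omega), ← hcoeff_le j (by omega)]
    exact hcross.antitoneOn_Ici_of_forall_le (hmode m hm hmax) hmi (hmi.trans hij) hij
end

section
/- For every fixed r ≥ 0, the r-Fubini numbers satisfy the asymptotic F_{n,r} ~ (1 / (2·(log 2)^{r+1})) · n! · n^r / (log 2)^n as n → ∞; that is, F_{n,r} · (log 2)^{n+r+1} · 2 / (n! · n^r) tends to 1. -/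
open Polynomial

/-- The ordered `r`-Stirling number `(k+r)! · S_r(n,k)`: the number of surjections
`f : Fin (r+n) → Fin (r+k)` whose restriction to the first `r` elements is injective. -/
def OS (r n k : ℕ) : ℕ :=
  Fintype.card {f : Fin (r + n) → Fin (r + k) //
    Function.Surjective f ∧ Function.Injective (fun i : Fin r => f (Fin.castAdd n i))}

/-- The `r`-Fubini polynomial `F_{n,r}(x) = ∑_{k=1}^n OS_r(n,k) xᵏ` for `n ≥ 1`,
with `F_{0,r}(x) = r!`. -/
noncomputable def rFubiniPoly (r n : ℕ) : Polynomial ℝ :=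
  if n = 0 then Polynomial.C (r.factorial : ℝ)
  else ∑ k ∈ Finset.Icc 1 n, Polynomial.C ((OS r n k : ℝ)) * Polynomial.X ^ k

/-- The `r`-Fubini number `F_{n,r} = ∑_{k=1}^n OS_r(n,k)` for `n ≥ 1`, with `F_{0,r} = r!`. -/
def rFubini (r n : ℕ) : ℕ :=
  if n = 0 then r.factorial else ∑ k ∈ Finset.Icc 1 n, OS r n k

/-!
Counting the functions `Fin (r + n) → Fin m` that are injective on the first `r` elements by the
size of their image gives `m.descFactorial r * m ^ n = ∑ k, m.choose (r + k) * OS r n k`. Summing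
against `q ^ m` with `q = x / (1 + x)` turns the `r`-Fubini polynomial at `x`, up to its missing
`k = 0` term, which is negligible, into the Dobiński-type series
`∑ m, m.descFactorial r * m ^ n * q ^ m`. Write `q = exp (-L)`. By the Lipschitz summation formula,
`(∑ m, m ^ k * exp (-w) ^ m) * w ^ (k + 1) / k! = ∑ n : ℤ, (w / (w + 2πi n)) ^ (k + 1)`, and for
`|Im w| < π` the point `0` is strictly closer to `w` than every other `2πi n`, so only the term
`n = 0` survives as `k → ∞`. A polynomial weight of degree `d` in the series contributes only
through its coefficient of degree `d`, which for the falling factorial is `1`.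
-/

open Filter Topology
open scoped Nat Real UpperHalfPlane

theorem norm_lt_norm_add_intCast {z : ℂ} (hz : |z.re| < 1 / 2) {n : ℤ} (hn : n ≠ 0) :
    ‖z‖ < ‖z + n‖ := by
  have hn_one : (1 : ℝ) ≤ |(n : ℝ)| := mod_cast Int.one_le_abs hn
  have hre : |z.re| < |z.re + n| := by
    have htriangle : |(n : ℝ)| ≤ |z.re + n| + |z.re| := by
      simpa using abs_sub (z.re + n) z.re
    linarith
  refine lt_of_pow_lt_pow_left₀ 2 (norm_nonneg _) ?_
  rw [Complex.sq_norm, Complex.sq_norm, Complex.normSq_apply, Complex.normSq_apply]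
  simpa [sq] using sq_lt_sq.mpr hre

theorem tendsto_tsum_div_add_intCast_pow {z : ℍ} (hz : |z.re| < 1 / 2) :
    Tendsto (fun k : ℕ => ∑' n : ℤ, ((z : ℂ) / (z + n)) ^ k) atTop (𝓝 1) := by
  have hlt {n : ℤ} (hn : n ≠ 0) : ‖(z : ℂ) / (z + n)‖ < 1 := by
    have h := norm_lt_norm_add_intCast hz hn
    rw [norm_div]
    exact (div_lt_one ((norm_nonneg _).trans_lt h)).mpr h
  have hle (n : ℤ) : ‖(z : ℂ) / (z + n)‖ ≤ 1 := by
    rcases eq_or_ne n 0 with rfl | hn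
    · simp [z.ne_zero]
    · exact (hlt hn).le
  have hsummable : Summable fun n : ℤ => ‖(z : ℂ) / (z + n)‖ ^ 2 := by
    have h := (EisensteinSeries.linear_right_summable (z : ℂ) 1 (k := 2) le_rfl).norm
    refine (h.mul_left (‖(z : ℂ)‖ ^ 2)).congr fun n => ?_
    simp [div_eq_mul_inv, mul_pow, zpow_ofNat]
  have hterm (n : ℤ) : Tendsto (fun k : ℕ => ((z : ℂ) / (z + n)) ^ k) atTop
      (𝓝 (if n = 0 then 1 else 0)) := by
    split_ifs with hn
    · simp [hn, z.ne_zero]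
    · exact tendsto_pow_atTop_nhds_zero_of_norm_lt_one (hlt hn)
  rw [← tsum_ite_eq (0 : ℤ) (fun _ => (1 : ℂ))]
  refine tendsto_tsum_of_dominated_convergence hsummable hterm ?_
  filter_upwards [eventually_ge_atTop 2] with k hk n
  rw [norm_pow]
  exact pow_le_pow_of_le_one (norm_nonneg _) (hle n) hk

theorem tsum_div_add_intCast_pow_succ (z : ℍ) {k : ℕ} (hk : 1 ≤ k) :
    ∑' n : ℤ, ((z : ℂ) / (z + n)) ^ (k + 1) =
      (∑' m : ℕ, (m : ℂ) ^ k * Complex.exp (2 * π * Complex.I * z) ^ m) *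
        (-2 * π * Complex.I * z) ^ (k + 1) / k ! := by
  simp_rw [div_eq_mul_one_div (z : ℂ), mul_pow, one_div_pow]
  rw [tsum_mul_left, EisensteinSeries.qExpansion_identity hk z]
  ring

theorem tendsto_tsum_pow_mul_exp_neg_pow {w : ℂ} (hre : 0 < w.re) (him : |w.im| < π) :
    Tendsto (fun k : ℕ => (∑' m : ℕ, (m : ℂ) ^ k * Complex.exp (-w) ^ m) * w ^ (k + 1) / k !)
      atTop (𝓝 1) := by
  have hπ : (π : ℂ) ≠ 0 := mod_cast Real.pi_ne_zero
  let z : ℍ := ⟨Complex.I * w / (2 * π : ℝ), by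
    rw [Complex.div_ofReal_im, Complex.I_mul_im]; positivity⟩
  have hz : (z : ℂ) = Complex.I * w / (2 * π : ℝ) := rfl
  have hz_re : |z.re| < 1 / 2 := by
    rw [← UpperHalfPlane.coe_re, hz, Complex.div_ofReal_re, Complex.I_mul_re, abs_div, abs_neg,
      abs_of_pos Real.two_pi_pos, div_lt_div_iff₀ Real.two_pi_pos two_pos]
    linarith
  have hwz : 2 * π * Complex.I * z = -w := by
    rw [hz, Complex.ofReal_mul, Complex.ofReal_ofNat]
    field_simp
    simp
  have hlim := (tendsto_tsum_div_add_intCast_pow hz_re).comp (tendsto_add_atTop_nat 1)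
  refine hlim.congr' ?_
  filter_upwards [eventually_ge_atTop 1] with k hk
  rw [Function.comp_apply, tsum_div_add_intCast_pow_succ z hk, neg_mul, neg_mul, neg_mul, hwz,
    neg_neg]

theorem tendsto_factorial_add_div (𝕜 : Type*) [RCLike 𝕜] (i : ℕ) :
    Tendsto (fun n : ℕ => ((n + i)! : 𝕜) / (n ! * (n : 𝕜) ^ i)) atTop (𝓝 1) := by
  induction i with
  | zero =>
    refine tendsto_const_nhds.congr fun n => ?_
    simp [Nat.factorial_ne_zero]
  | succ i ih =>
    have hratio : Tendsto (fun n : ℕ => 1 + ((i + 1 : ℕ) : 𝕜) / n) atTop (𝓝 1) := by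
      simpa using (tendsto_const_div_atTop_nhds_zero_nat ((i + 1 : ℕ) : 𝕜)).const_add 1
    have hmul := ih.mul hratio
    rw [mul_one] at hmul
    refine hmul.congr' ?_
    filter_upwards [eventually_ne_atTop 0] with n hn
    have hn' : (n : 𝕜) ≠ 0 := mod_cast hn
    rw [← add_assoc, Nat.factorial_succ]
    push_cast
    field_simp
    ring

theorem tsum_eval_mul_pow_mul_geometric {𝕜 : Type*} [NormedField 𝕜] [CompleteSpace 𝕜] (P : 𝕜[X])
    {d : ℕ} (hd : P.natDegree ≤ d) (n : ℕ) {q : 𝕜} (hq : ‖q‖ < 1) :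
    ∑' m : ℕ, P.eval (m : 𝕜) * (m : 𝕜) ^ n * q ^ m =
      ∑ i ∈ Finset.range (d + 1), P.coeff i * ∑' m : ℕ, (m : 𝕜) ^ (n + i) * q ^ m := by
  simp_rw [← tsum_mul_left]
  rw [← Summable.tsum_finsetSum fun i _ =>
    (summable_pow_mul_geometric_of_norm_lt_one (n + i) hq).mul_left _]
  refine tsum_congr fun m => ?_
  rw [P.eval_eq_sum_range' (Nat.lt_succ_of_le hd), Finset.sum_mul, Finset.sum_mul]
  exact Finset.sum_congr rfl fun i _ => by ring

theorem tendsto_tsum_eval_mul_pow_mul_exp_neg_pow (P : ℂ[X]) {d : ℕ} (hd : P.natDegree ≤ d)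
    {w : ℂ} (hre : 0 < w.re) (him : |w.im| < π) :
    Tendsto (fun n : ℕ => (∑' m : ℕ, P.eval (m : ℂ) * (m : ℂ) ^ n * Complex.exp (-w) ^ m) *
      w ^ (n + d + 1) / (n ! * (n : ℂ) ^ d)) atTop (𝓝 (P.coeff d)) := by
  let S : ℕ → ℂ := fun k => ∑' m : ℕ, (m : ℂ) ^ k * Complex.exp (-w) ^ m
  have hexp : ‖Complex.exp (-w)‖ < 1 := by simpa [Complex.norm_exp] using hre
  have hterm (i : ℕ) : Tendsto (fun n : ℕ => P.coeff i * (S (n + i) * w ^ (n + i + 1) / (n + i)! *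
      ((n + i)! / (n ! * (n : ℂ) ^ i)) * (w / n) ^ (d - i))) atTop
      (𝓝 (P.coeff i * (1 * 1 * 0 ^ (d - i)))) :=
    ((((tendsto_tsum_pow_mul_exp_neg_pow hre him).comp (tendsto_add_atTop_nat i)).mul
      (tendsto_factorial_add_div ℂ i)).mul
        ((tendsto_const_div_atTop_nhds_zero_nat w).pow (d - i))).const_mul _
  have hsum := tendsto_finsetSum (Finset.range (d + 1)) fun i _ => hterm i
  have hcoeff : ∑ i ∈ Finset.range (d + 1), P.coeff i * (1 * 1 * 0 ^ (d - i)) = P.coeff d := by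
    rw [Finset.sum_range_succ, Finset.sum_eq_zero fun i hi => ?_]
    · simp
    · rw [zero_pow (Nat.sub_ne_zero_of_lt (Finset.mem_range.mp hi)), mul_zero, mul_zero]
  rw [hcoeff] at hsum
  refine hsum.congr' ?_
  filter_upwards [eventually_ne_atTop 0] with n hn
  rw [tsum_eval_mul_pow_mul_geometric P hd n hexp, Finset.sum_mul, Finset.sum_div]
  refine Finset.sum_congr rfl fun i hi => ?_
  obtain ⟨e, rfl⟩ := Nat.exists_eq_add_of_le (Finset.mem_range_succ_iff.mp hi)
  have hfact : ((n + i)! : ℂ) ≠ 0 := mod_cast (n + i).factorial_ne_zero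
  rw [Nat.add_sub_cancel_left, div_pow]
  field_simp
  ring

theorem tendsto_tsum_descFactorial_mul_pow_mul_exp_neg_pow (r : ℕ) {L : ℝ} (hL : 0 < L) :
    Tendsto (fun n : ℕ => (∑' m : ℕ, (m.descFactorial r : ℝ) * (m : ℝ) ^ n * Real.exp (-L) ^ m) *
      L ^ (n + r + 1) / (n ! * (n : ℝ) ^ r)) atTop (𝓝 1) := by
  have hcoeff : (descPochhammer ℂ r).coeff r = 1 := by
    simpa [Monic, leadingCoeff, descPochhammer_natDegree] using monic_descPochhammer ℂ r
  have h := tendsto_tsum_eval_mul_pow_mul_exp_neg_pow (descPochhammer ℂ r)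
    (descPochhammer_natDegree ℂ r).le (w := L) (by simpa using hL) (by simpa using Real.pi_pos)
  rw [hcoeff] at h
  simp only [descPochhammer_eval_eq_descFactorial] at h
  rw [← tendsto_ofReal_iff]
  push_cast
  exact h

/-- The number of surjections `f : α → Fin j` for which `f ∘ ι` is injective. For the inclusion
`ι` of the first `r` of `r + n` elements and `j = r + k` this is `OS r n k`; leaving `j`
unconstrained makes it possible to count functions by the size of their image. -/
noncomputable def injSurjCount {γ α : Type*} (ι : γ → α) (j : ℕ) : ℕ :=
  Nat.card {f : α → Fin j // Function.Surjective f ∧ Function.Injective (f ∘ ι)}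

section InjSurjCount

variable {γ α β : Type*} (ι : γ → α)

theorem injSurjCount_natCard [Finite β] :
    injSurjCount ι (Nat.card β) =
      Nat.card {f : α → β // Function.Surjective f ∧ Function.Injective (f ∘ ι)} := by
  let e := Finite.equivFin β
  exact Nat.card_congr (((Equiv.refl α).arrowCongr e.symm).subtypeEquiv fun f =>
    and_congr (EquivLike.comp_surjective f e.symm).symm
      (EquivLike.comp_injective (f ∘ ι) e.symm).symm)

variable {ι} in
theorem injSurjCount_eq_zero_of_lt_card {j : ℕ} (hj : j < Nat.card γ) :
    injSurjCount ι j = 0 := by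
  refine @Nat.card_of_isEmpty _ ⟨fun f => ?_⟩
  have h := Nat.card_le_card_of_injective _ f.2.2
  rw [Nat.card_fin] at h
  omega

variable {ι} in
theorem injSurjCount_eq_zero_of_card_lt [Finite α] {j : ℕ} (hj : Nat.card α < j) :
    injSurjCount ι j = 0 := by
  refine @Nat.card_of_isEmpty _ ⟨fun f => ?_⟩
  have h := Nat.card_le_card_of_surjective _ f.2.1
  rw [Nat.card_fin] at h
  omega

theorem card_injective_comp_and_range_eq (s : Finset β) :
    Nat.card {f : α → β // Function.Injective (f ∘ ι) ∧ Set.range f = s} =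
      injSurjCount ι s.card := by
  rw [← Nat.card_eq_finsetCard, injSurjCount_natCard]
  exact Nat.card_congr
    { toFun := fun f => ⟨fun i => ⟨f.1 i, f.2.2.subset (Set.mem_range_self i)⟩,
        fun ⟨y, hy⟩ => (f.2.2.superset hy).imp fun _ => Subtype.ext,
        fun a b hab => f.2.1 (congrArg Subtype.val hab)⟩
      invFun := fun g => ⟨fun i => g.1 i, Subtype.val_injective.comp g.2.2,
        (g.2.1.range_comp Subtype.val).trans Subtype.range_coe⟩
      left_inv := fun f => rfl
      right_inv := fun g => rfl }

theorem card_injective_comp_eq_sum_range [Finite α] [Fintype β] :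
    Nat.card {f : α → β // Function.Injective (f ∘ ι)} =
      ∑ s : Finset β, Nat.card {f : α → β // Function.Injective (f ∘ ι) ∧ Set.range f = s} := by
  classical
  have := Fintype.ofFinite α
  rw [← Nat.card_congr (Equiv.sigmaFiberEquiv
    fun f : {f : α → β // Function.Injective (f ∘ ι)} => (Set.range f.1).toFinset), Nat.card_sigma]
  refine Finset.sum_congr rfl fun s _ => Nat.card_congr <|
    (Equiv.subtypeSubtypeEquivSubtypeInter _ fun f => (Set.range f).toFinset = s).trans <|
      Equiv.subtypeEquivRight fun f => and_congr_right' ?_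
  rw [← Finset.coe_inj, Set.coe_toFinset]

theorem card_injective_comp_eq_sum [Finite α] [Finite β] :
    Nat.card {f : α → β // Function.Injective (f ∘ ι)} =
      ∑ j ∈ Finset.range (Nat.card α + 1), (Nat.card β).choose j * injSurjCount ι j := by
  have := Fintype.ofFinite β
  calc Nat.card {f : α → β // Function.Injective (f ∘ ι)}
      = ∑ s : Finset β, injSurjCount ι s.card := by
        simp_rw [card_injective_comp_eq_sum_range, card_injective_comp_and_range_eq]
    _ = ∑ j ∈ Finset.range (Nat.card β + 1), (Nat.card β).choose j * injSurjCount ι j := by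
        simpa using Finset.sum_powerset_apply_card (injSurjCount ι) (x := (Finset.univ : Finset β))
    _ = _ := by
        refine Finset.sum_congr_of_eq_on_inter (fun j _ hj => ?_) (fun j _ hj => ?_)
          fun _ _ _ => rfl
        · rw [injSurjCount_eq_zero_of_card_lt (by simpa using hj), mul_zero]
        · rw [Nat.choose_eq_zero_of_lt (by simpa using hj), zero_mul]

end InjSurjCount

theorem OS_eq_injSurjCount (r n k : ℕ) :
    OS r n k = injSurjCount (Fin.castAdd n : Fin r → Fin (r + n)) (r + k) :=
  Nat.card_eq_fintype_card.symm

theorem card_injective_comp_castAdd (r n m : ℕ) :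
    Nat.card {f : Fin (r + n) → Fin m // Function.Injective (f ∘ Fin.castAdd n)} =
      m.descFactorial r * m ^ n := by
  let e : {f : Fin (r + n) → Fin m // Function.Injective (f ∘ Fin.castAdd n)} ≃
      (Fin r ↪ Fin m) × (Fin n → Fin m) :=
    ((Fin.appendEquiv r n).symm.subtypeEquiv (q := fun p => Function.Injective p.1)
      fun f => Iff.rfl).trans <| Equiv.prodSubtypeFstEquivSubtypeProd.trans <|
        (Equiv.subtypeInjectiveEquivEmbedding _ _).prodCongr (Equiv.refl _)
  rw [Nat.card_congr e]
  simp [Fintype.card_embedding_eq]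

theorem descFactorial_mul_pow_eq_sum (r n m : ℕ) :
    m.descFactorial r * m ^ n = ∑ k ∈ Finset.range (n + 1), m.choose (r + k) * OS r n k := by
  have h := card_injective_comp_eq_sum (β := Fin m) (Fin.castAdd n : Fin r → Fin (r + n))
  rw [card_injective_comp_castAdd, Nat.card_fin, Nat.card_fin, add_assoc, Finset.sum_range_add,
    Finset.sum_eq_zero fun j hj => ?_, zero_add] at h
  · simpa only [OS_eq_injSurjCount] using h
  · rw [injSurjCount_eq_zero_of_lt_card (by simpa using hj), mul_zero]

theorem hasSum_choose_mul_pow {𝕜 : Type*} [NormedDivisionRing 𝕜] [HasSummableGeomSeries 𝕜]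
    (j : ℕ) {q : 𝕜} (hq : ‖q‖ < 1) :
    HasSum (fun m : ℕ => (m.choose j : 𝕜) * q ^ m) (q ^ j / (1 - q) ^ (j + 1)) := by
  rw [← hasSum_nat_add_iff' j, Finset.sum_eq_zero fun m hm => ?_, sub_zero, div_eq_mul_one_div]
  · refine ((hasSum_choose_mul_geometric_of_norm_lt_one j hq).mul_left (q ^ j)).congr_fun
      fun m => ?_
    rw [← mul_assoc, (Nat.cast_commute _ (q ^ j)).symm.eq, mul_assoc, ← pow_add, add_comm j m]
  · rw [Nat.choose_eq_zero_of_lt (Finset.mem_range.mp hm), Nat.cast_zero, zero_mul]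

theorem hasSum_choose_mul_div_one_add_pow (j : ℕ) {x : ℝ} (hx : 0 ≤ x) :
    HasSum (fun m : ℕ => (m.choose j : ℝ) * (x / (1 + x)) ^ m) ((1 + x) * x ^ j) := by
  have hq : ‖x / (1 + x)‖ < 1 := by
    rw [Real.norm_of_nonneg (by positivity), div_lt_one (by positivity)]
    linarith
  have hone_sub : 1 - x / (1 + x) = (1 + x)⁻¹ := by
    field_simp
    ring
  have hvalue : (x / (1 + x)) ^ j / (1 - x / (1 + x)) ^ (j + 1) = (1 + x) * x ^ j := by
    rw [hone_sub, div_pow, inv_pow, pow_succ (1 + x)]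
    field_simp
  exact hvalue ▸ hasSum_choose_mul_pow j hq

theorem tsum_descFactorial_mul_pow_mul_div_one_add_pow (r n : ℕ) {x : ℝ} (hx : 0 ≤ x) :
    ∑' m : ℕ, (m.descFactorial r : ℝ) * (m : ℝ) ^ n * (x / (1 + x)) ^ m =
      (1 + x) * x ^ r * ∑ k ∈ Finset.range (n + 1), (OS r n k : ℝ) * x ^ k := by
  have h : HasSum (fun m : ℕ => ∑ k ∈ Finset.range (n + 1),
      (OS r n k : ℝ) * ((m.choose (r + k) : ℝ) * (x / (1 + x)) ^ m))
      (∑ k ∈ Finset.range (n + 1), (OS r n k : ℝ) * ((1 + x) * x ^ (r + k))) :=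
    hasSum_sum fun k _ => (hasSum_choose_mul_div_one_add_pow (r + k) hx).mul_left _
  calc ∑' m : ℕ, (m.descFactorial r : ℝ) * (m : ℝ) ^ n * (x / (1 + x)) ^ m
      = ∑' m : ℕ, ∑ k ∈ Finset.range (n + 1),
          (OS r n k : ℝ) * ((m.choose (r + k) : ℝ) * (x / (1 + x)) ^ m) := by
        refine tsum_congr fun m => ?_
        have hm := congrArg (Nat.cast (R := ℝ)) (descFactorial_mul_pow_eq_sum r n m)
        push_cast at hm
        rw [hm, Finset.sum_mul]
        exact Finset.sum_congr rfl fun k _ => by ring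
    _ = ∑ k ∈ Finset.range (n + 1), (OS r n k : ℝ) * ((1 + x) * x ^ (r + k)) := h.tsum_eq
    _ = _ := by
        rw [Finset.mul_sum]
        exact Finset.sum_congr rfl fun k _ => by ring

theorem OS_le (r n k : ℕ) : OS r n k ≤ (r + k) ^ (r + n) :=
  (Fintype.card_subtype_le _).trans_eq (by simp)

theorem tendsto_OS_mul_pow_div_factorial (r k : ℕ) (x : ℝ) :
    Tendsto (fun n : ℕ => (OS r n k : ℝ) * x ^ n / n !) atTop (𝓝 0) := by
  have hbound := (FloorSemiring.tendsto_pow_div_factorial_atTop (((r + k : ℕ) : ℝ) * |x|)).const_mul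
    (((r + k : ℕ) : ℝ) ^ r)
  rw [mul_zero] at hbound
  refine squeeze_zero_norm (fun n => ?_) hbound
  have hOS : (OS r n k : ℝ) ≤ ((r + k : ℕ) : ℝ) ^ (r + n) := mod_cast OS_le r n k
  calc ‖(OS r n k : ℝ) * x ^ n / (n ! : ℝ)‖
      = (OS r n k : ℝ) * |x| ^ n / n ! := by simp
    _ ≤ ((r + k : ℕ) : ℝ) ^ (r + n) * |x| ^ n / n ! := by gcongr
    _ = _ := by ring

theorem eval_rFubiniPoly_add_OS_zero (r : ℕ) {n : ℕ} (hn : n ≠ 0) (x : ℝ) :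
    (rFubiniPoly r n).eval x + OS r n 0 =
      ∑ k ∈ Finset.range (n + 1), (OS r n k : ℝ) * x ^ k := by
  have heval : (rFubiniPoly r n).eval x = ∑ k ∈ Finset.Icc 1 n, (OS r n k : ℝ) * x ^ k := by
    rw [rFubiniPoly, if_neg hn]
    simp [eval_finsetSum]
  rw [heval, Finset.range_eq_Ico, Finset.sum_eq_sum_Ico_succ_bot n.add_one_pos, pow_zero, mul_one,
    add_comm, zero_add, Finset.Ico_add_one_right_eq_Icc]

theorem eval_one_rFubiniPoly (r n : ℕ) : (rFubiniPoly r n).eval 1 = rFubini r n := by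
  rw [rFubiniPoly, rFubini]
  split_ifs <;> simp [eval_finsetSum]

theorem rFubini_asymptotic_general (r : ℕ) {x : ℝ} (hx : 0 < x) :
    Tendsto (fun n : ℕ => (rFubiniPoly r n).eval x * Real.log (1 + 1 / x) ^ (n + r + 1) *
      ((1 + x) * x ^ r) / (n ! * (n : ℝ) ^ r)) atTop (𝓝 1) := by
  set L := Real.log (1 + 1 / x)
  have hL : 0 < L := Real.log_pos (by simpa using hx)
  have hexp : Real.exp (-L) = x / (1 + x) := by
    rw [Real.exp_neg, Real.exp_log (by positivity)]
    field_simp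
    rw [add_comm]
  have hmain := tendsto_tsum_descFactorial_mul_pow_mul_exp_neg_pow r hL
  simp only [hexp, tsum_descFactorial_mul_pow_mul_div_one_add_pow r _ hx.le] at hmain
  have hzero := (tendsto_OS_mul_pow_div_factorial r 0 L).mul
    (((tendsto_one_div_atTop_nhds_zero_nat (𝕜 := ℝ)).pow r).mul_const
      (L ^ (r + 1) * ((1 + x) * x ^ r)))
  rw [zero_mul] at hzero
  have hdiff := hmain.sub hzero
  rw [sub_zero] at hdiff
  refine hdiff.congr' ?_
  filter_upwards [eventually_ne_atTop 0] with n hn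
  rw [← eval_rFubiniPoly_add_OS_zero r hn x]
  ring

/-- For fixed `r`, `F_{n,r} ∼ (1/(2·(log 2)^{r+1})) · n!·nʳ/(log 2)ⁿ` as `n → ∞`. -/
theorem rFubini_asymptotic (r : ℕ) :
    Filter.Tendsto
      (fun n : ℕ => (rFubini r n : ℝ) * (Real.log 2) ^ (n + r + 1) * 2 /
        ((n.factorial : ℝ) * (n : ℝ) ^ r))
      Filter.atTop (nhds 1) := by
  refine (rFubini_asymptotic_general r one_pos).congr fun n => ?_
  norm_num [eval_one_rFubiniPoly]
end

section
/- For every fixed m ≥ 1, the Whitney–Fubini numbers F_m(n) = F_m(n, 1) satisfy Σ_{n=0}^{∞} F_m(n) · t^n / n! = e^t / (1 - (e^{m t} - 1)/m) for all real t with |t| < log(m+1)/m, the series converging absolutely on this interval. -/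
open Polynomial

/-- The Whitney–Fubini polynomials: `F_m(0,x) = 1` and
`F_m(n,x) = (x+1)·F_m(n-1,x) + (x² + m x)·F_m'(n-1,x)`; the `k`-th coefficient of
`F_m(n,x)` is `k!·W_m(n,k)`, where `W_m(n,k)` are the Whitney numbers of the second
kind of the Dowling lattice. -/
noncomputable def WFPoly (m : ℕ) : ℕ → Polynomial ℝ
  | 0 => 1
  | n + 1 => (Polynomial.X + 1) * WFPoly m n +
      (Polynomial.X ^ 2 + Polynomial.C (m : ℝ) * Polynomial.X) *
        Polynomial.derivative (WFPoly m n)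

/-- The Whitney–Fubini numbers `F_m(n) = F_m(n, 1)`. -/
noncomputable def WFNum (m n : ℕ) : ℝ := (WFPoly m n).eval 1

/-! The recursion for `F_m(n, x)` is differentiation along a solution `y` of the Riccati equation
`y' = y² + m y`: if `g' = (y + 1) g`, then for every polynomial `P`,
`(g · P(y))' = g · ((y + 1) P(y) + (y² + m y) P'(y))`, so the `n`-th derivative of `g` is
`g · F_m(n, y)`. For the solution with `g 0 = 1` and `y 0 = x`, the derivatives of
`g z = eᶻ / (1 - x (e^{mz} - 1) / m)` at `0` are therefore the numbers `F_m(n, x)`, and `g` is the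
sum of its Taylor series on every disc about `0` in which the denominator has no zero. -/

namespace WFPoly

lemma iteratedDeriv_eqOn_mul_aeval {𝕜 : Type*} [NontriviallyNormedField 𝕜] [Algebra ℝ 𝕜]
    {m : ℕ} {s : Set 𝕜} (hs : IsOpen s) {g y : 𝕜 → 𝕜}
    (hg : ∀ z ∈ s, HasDerivAt g ((y z + 1) * g z) z)
    (hy : ∀ z ∈ s, HasDerivAt y (y z ^ 2 + m * y z) z) (n : ℕ) :
    s.EqOn (iteratedDeriv n g) (fun z ↦ g z * aeval (y z) (WFPoly m n)) := by
  induction n with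
  | zero => simp [WFPoly, Set.EqOn]
  | succ n ih =>
    intro z hz
    have hP : HasDerivAt (fun w ↦ aeval (y w) (WFPoly m n))
        (aeval (y z) (derivative (WFPoly m n)) * (y z ^ 2 + m * y z)) z :=
      ((WFPoly m n).hasDerivAt_aeval (y z)).comp z (hy z hz)
    calc iteratedDeriv (n + 1) g z
        = deriv (fun w ↦ g w * aeval (y w) (WFPoly m n)) z := by
          rw [iteratedDeriv_succ, (ih.eventuallyEq_of_mem (hs.mem_nhds hz)).deriv_eq]
      _ = (y z + 1) * g z * aeval (y z) (WFPoly m n) +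
            g z * (aeval (y z) (derivative (WFPoly m n)) * (y z ^ 2 + m * y z)) :=
          ((hg z hz).fun_mul hP).deriv
      _ = g z * aeval (y z) (WFPoly m (n + 1)) := by
          simp only [WFPoly, map_add, map_mul, map_pow, aeval_X, map_one, map_natCast]
          ring

/-- The denominator `1 - x (e^{az} - 1) / a` of the exponential generating function; the
convention `w / 0 = 0` makes it `1` when `a = 0`. -/
noncomputable def egfDenom (a x z : ℂ) : ℂ := 1 - x * (Complex.exp (a * z) - 1) / a

/-- The exponential generating function `eᶻ / (1 - x (e^{az} - 1) / a)` of the Whitney–Fubini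
polynomials at `x`, with `a` in place of the integer `m`. -/
noncomputable def egf (a x z : ℂ) : ℂ := Complex.exp z / egfDenom a x z

/-- For `a ≠ 0`, the solution `y` near `0` of the Riccati equation `y' = y² + a y` with `y 0 = x`;
the recursion of `WFPoly` is differentiation along it. -/
noncomputable def riccatiFlow (a x z : ℂ) : ℂ := x * Complex.exp (a * z) / egfDenom a x z

section GeneratingFunction

variable {a x z : ℂ}

@[simp] lemma egfDenom_zero : egfDenom a x 0 = 1 := by simp [egfDenom]

@[simp] lemma egf_zero : egf a x 0 = 1 := by simp [egf]

@[simp] lemma riccatiFlow_zero : riccatiFlow a x 0 = x := by simp [riccatiFlow]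

lemma continuous_egfDenom : Continuous (egfDenom a x) := by
  unfold egfDenom
  fun_prop

lemma hasDerivAt_cexp_const_mul (a z : ℂ) :
    HasDerivAt (fun w ↦ Complex.exp (a * w)) (a * Complex.exp (a * z)) z := by
  simpa [mul_comm] using ((hasDerivAt_id z).const_mul a).cexp

lemma hasDerivAt_egfDenom (ha : a ≠ 0) :
    HasDerivAt (egfDenom a x) (-(x * Complex.exp (a * z))) z := by
  have hexp := hasDerivAt_cexp_const_mul a z
  convert! (((hexp.sub_const 1).const_mul x).div_const a).const_sub 1 using 1
  field_simp

lemma hasDerivAt_egf (ha : a ≠ 0) (hz : egfDenom a x z ≠ 0) :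
    HasDerivAt (egf a x) ((riccatiFlow a x z + 1) * egf a x z) z := by
  convert! (Complex.hasDerivAt_exp z).fun_div (hasDerivAt_egfDenom ha) hz using 1
  simp only [riccatiFlow, egf]
  field_simp
  ring

lemma hasDerivAt_riccatiFlow (ha : a ≠ 0) (hz : egfDenom a x z ≠ 0) :
    HasDerivAt (riccatiFlow a x) (riccatiFlow a x z ^ 2 + a * riccatiFlow a x z) z := by
  convert! ((hasDerivAt_cexp_const_mul a z).const_mul x).fun_div (hasDerivAt_egfDenom ha) hz
    using 1
  simp only [riccatiFlow]
  field_simp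
  ring

lemma egfDenom_ne_zero (h : ‖x‖ * (Real.exp (‖a‖ * ‖z‖) - 1) < ‖a‖) : egfDenom a x z ≠ 0 := by
  intro hzero
  have ha : a ≠ 0 := by
    rintro rfl
    simp at h
  have hexp : x * (Complex.exp (a * z) - 1) = a :=
    (div_eq_one_iff_eq ha).1 (sub_eq_zero.1 hzero).symm
  have hnorm : ‖Complex.exp (a * z) - 1‖ ≤ Real.exp (‖a‖ * ‖z‖) - 1 := by
    simpa using Complex.norm_exp_sub_sum_le_exp_norm_sub_sum (a * z) 1
  refine h.not_ge ?_
  calc ‖a‖ = ‖x‖ * ‖Complex.exp (a * z) - 1‖ := by rw [← norm_mul, hexp]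
    _ ≤ ‖x‖ * (Real.exp (‖a‖ * ‖z‖) - 1) := by gcongr

lemma exists_ball_egfDenom_ne_zero (h : ‖x‖ * (Real.exp (‖a‖ * ‖z‖) - 1) < ‖a‖) :
    ∃ r, z ∈ Metric.ball 0 r ∧ ∀ w ∈ Metric.ball 0 r, egfDenom a x w ≠ 0 := by
  have hcont : Continuous fun r : ℝ ↦ ‖x‖ * (Real.exp (‖a‖ * r) - 1) := by fun_prop
  obtain ⟨r, hzr, hr⟩ := (hcont.continuousAt.eventually_lt continuousAt_const h).exists_gt
  refine ⟨r, mem_ball_zero_iff.2 hzr, fun w hw ↦ egfDenom_ne_zero (lt_of_le_of_lt ?_ hr)⟩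
  gcongr
  exact (mem_ball_zero_iff.1 hw).le

lemma iteratedDeriv_egf_zero {m : ℕ} (hm : m ≠ 0) (n : ℕ) :
    iteratedDeriv n (egf m x) 0 = aeval x (WFPoly m n) := by
  have hm' : (m : ℂ) ≠ 0 := Nat.cast_ne_zero.2 hm
  have hopen : IsOpen {z | egfDenom m x z ≠ 0} := isOpen_ne.preimage continuous_egfDenom
  have h := iteratedDeriv_eqOn_mul_aeval hopen (fun _ ↦ hasDerivAt_egf hm')
    (fun _ ↦ hasDerivAt_riccatiFlow hm') n (x := 0) (by simp)
  simpa using h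

lemma hasSum_egf {m : ℕ} (hm : m ≠ 0) {r : ℝ} (hr : ∀ w ∈ Metric.ball 0 r, egfDenom m x w ≠ 0)
    (hz : z ∈ Metric.ball 0 r) :
    HasSum (fun n : ℕ ↦ aeval x (WFPoly m n) * z ^ n / (n.factorial : ℂ)) (egf m x z) := by
  have hdiff : DifferentiableOn ℂ (egf m x) (Metric.ball 0 r) := fun w hw ↦
    (hasDerivAt_egf (Nat.cast_ne_zero.2 hm) (hr w hw)).differentiableAt.differentiableWithinAt
  refine (Complex.hasSum_taylorSeries_on_ball hdiff hz).congr_fun fun n ↦ ?_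
  rw [iteratedDeriv_egf_zero hm, sub_zero, smul_eq_mul, smul_eq_mul]
  ring

end GeneratingFunction

end WFPoly

lemma ofReal_WFNum (m n : ℕ) : (WFNum m n : ℂ) = aeval 1 (WFPoly m n) := by
  simpa [WFNum] using (aeval_algebraMap_apply_eq_algebraMap_eval (A := ℂ) 1 (WFPoly m n)).symm

lemma exp_mul_sub_one_lt_iff_lt_log_div {c s : ℝ} (hc : 0 < c) :
    Real.exp (c * s) - 1 < c ↔ s < Real.log (c + 1) / c := by
  rw [sub_lt_iff_lt_add, ← Real.lt_log_iff_exp_lt (by positivity), lt_div_iff₀' hc]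

open WFPoly in
theorem whitneyFubini_egf_general (m : ℕ) (x z : ℂ)
    (h : ‖x‖ * (Real.exp (m * ‖z‖) - 1) < m) :
    HasSum (fun n : ℕ ↦ aeval x (WFPoly m n) * z ^ n / (n.factorial : ℂ))
      (Complex.exp z / (1 - x * (Complex.exp (m * z) - 1) / m)) := by
  have hm : m ≠ 0 := by
    rintro rfl
    simp at h
  obtain ⟨r, hz, hr⟩ := exists_ball_egfDenom_ne_zero (a := m) (by simpa using h)
  exact hasSum_egf hm hr hz

/-- For `m ≥ 1`, the exponential generating function of the Whitney–Fubini numbers: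
`∑ₙ F_m(n)·tⁿ/n! = eᵗ/(1 - (e^{mt} - 1)/m)` for `|t| < log(m+1)/m`
(the series converging absolutely there). -/
theorem whitneyFubini_egf (m : ℕ) (hm : 1 ≤ m) (t : ℝ)
    (ht : |t| < Real.log ((m : ℝ) + 1) / (m : ℝ)) :
    HasSum (fun n : ℕ => WFNum m n * t ^ n / (n.factorial : ℝ))
      (Real.exp t / (1 - (Real.exp ((m : ℝ) * t) - 1) / (m : ℝ))) := by
  have hexp := (exp_mul_sub_one_lt_iff_lt_log_div (Nat.cast_pos.2 hm)).2 ht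
  rw [← Complex.hasSum_ofReal]
  simpa [ofReal_WFNum] using whitneyFubini_egf_general m 1 t (by simpa using hexp)
end

section
/- For every fixed m ≥ 1, the Whitney–Fubini numbers F_m(n) = F_m(n, 1) satisfy the asymptotic F_m(n) ~ (m·(1+m)^{1/m - 1} / log(m+1)) · m^n · n! / (log(m+1))^n as n → ∞; that is, F_m(n) · (log(m+1))^{n+1} / (m^{n+1} · (1+m)^{1/m - 1} · n!) tends to 1. -/
open Polynomial

/-!
The recurrence gives the Dobinski-type formula
`F_m(n, m q / (1 - q)) / (1 - q) = ∑ j, (1 + m j) ^ n q ^ j` for `|q| < 1`, because the functional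
`p ↦ [q ^ j] (1 - q)⁻¹ p(m q / (1 - q))` turns the differential operator of the recurrence into
multiplication by `1 + m j`.  With `a = -log q` and `b = 1 / m`, the `j`-th term is, up to a factor
independent of `j`, the value at `a b + a j` of the Gamma density of shape `n + 1`, so the series is
a Riemann sum of step `a` of that density.  It differs from the integral by at most `a` times the
total variation of the density, which by Cauchy–Schwarz is at most `1 / √n`, the ratio of standard
deviation to mean for shape `n`; and the integral over `(a b, ∞)` tends to `1`.
-/

open Filter MeasureTheory Set Topology
open scoped Nat

section Dobinski

/-- The linear functional on polynomials sending `X ^ k` to `c ^ k * j.choose k`, that is, sending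
`p` to the coefficient of `q ^ j` in the power series `(1 - q)⁻¹ p(c q / (1 - q))`. It diagonalises
the recurrence of the Whitney–Fubini polynomials. -/
noncomputable def chooseFunctional {R : Type*} [CommSemiring R] (c : R) (j : ℕ) : R[X] →ₗ[R] R :=
  lsum fun k => (c ^ k * j.choose k) • LinearMap.id

theorem chooseFunctional_monomial {R : Type*} [CommSemiring R] (c : R) (j k : ℕ) (r : R) :
    chooseFunctional c j (monomial k r) = c ^ k * j.choose k * r := by
  simp [chooseFunctional, lsum_apply, sum_monomial_index]

theorem X_add_one_mul_monomial_add_mul_derivative {R : Type*} [CommSemiring R] (c : R) (k : ℕ)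
    (r : R) :
    (X + 1) * monomial k r + (X ^ 2 + C c * X) * derivative (monomial k r) =
      monomial (k + 1) ((k + 1) * r) + monomial k ((1 + c * k) * r) := by
  rw [derivative_monomial]
  simp only [← C_mul_X_pow_eq_monomial, C_mul, C_add, C_1]
  cases k with
  | zero =>
    simp only [Nat.cast_zero, C_0]
    ring
  | succ k =>
    simp only [Nat.cast_add_one, C_add, C_1, Nat.add_sub_cancel]
    ring

theorem chooseFunctional_X_add_one_mul_add_mul_derivative {R : Type*} [CommSemiring R] (c : R)
    (j : ℕ) (p : R[X]) :
    chooseFunctional c j ((X + 1) * p + (X ^ 2 + C c * X) * derivative p) =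
      (1 + c * j) * chooseFunctional c j p := by
  induction p using Polynomial.induction_on' with
  | add p q hp hq =>
    rw [map_add (chooseFunctional c j) p q, mul_add (1 + c * j), ← hp, ← hq, ← map_add,
      derivative_add]
    congr 1
    ring
  | monomial k r =>
    have h_choose : (j.choose (k + 1) : R) * (k + 1) + j.choose k * k = j.choose k * j := by
      norm_cast
      rcases le_or_gt k j with hk | hk
      · rw [Nat.choose_succ_right_eq, ← mul_add, Nat.sub_add_cancel hk]
      · simp [Nat.choose_eq_zero_of_lt hk, Nat.choose_eq_zero_of_lt (hk.trans k.lt_succ_self)]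
    rw [X_add_one_mul_monomial_add_mul_derivative, map_add]
    simp only [chooseFunctional_monomial]
    calc _ = c ^ k * j.choose k * r +
          c ^ (k + 1) * r * (j.choose (k + 1) * (k + 1) + j.choose k * k) := by ring
      _ = (1 + c * j) * (c ^ k * j.choose k * r) := by
        rw [h_choose]
        ring

theorem chooseFunctional_WFPoly (m j n : ℕ) :
    chooseFunctional (m : ℝ) j (WFPoly m n) = (1 + m * j) ^ n := by
  induction n with
  | zero => simpa [WFPoly] using chooseFunctional_monomial (m : ℝ) j 0 1
  | succ n ih =>
    rw [WFPoly, chooseFunctional_X_add_one_mul_add_mul_derivative, ih, pow_succ']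

theorem hasSum_choose_mul_pow_of_norm_lt_one {𝕜 : Type*} [NormedField 𝕜] (k : ℕ) {q : 𝕜}
    (hq : ‖q‖ < 1) :
    HasSum (fun j : ℕ => (j.choose k : 𝕜) * q ^ j) (q ^ k / (1 - q) ^ (k + 1)) := by
  have h_zero : ∑ j ∈ Finset.range k, (j.choose k : 𝕜) * q ^ j = 0 :=
    Finset.sum_eq_zero fun j hj => by simp [Nat.choose_eq_zero_of_lt (Finset.mem_range.1 hj)]
  rw [← hasSum_nat_add_iff' k, h_zero, sub_zero, ← mul_one_div]
  refine ((hasSum_choose_mul_geometric_of_norm_lt_one k hq).mul_left (q ^ k)).congr_fun ?_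
  intro j
  ring

theorem hasSum_chooseFunctional_mul_pow {𝕜 : Type*} [NormedField 𝕜] (c : 𝕜) {q : 𝕜}
    (hq : ‖q‖ < 1) (p : 𝕜[X]) :
    HasSum (fun j : ℕ => chooseFunctional c j p * q ^ j) (p.eval (c * q / (1 - q)) / (1 - q)) := by
  induction p using Polynomial.induction_on' with
  | add p₁ p₂ h₁ h₂ => simpa [add_mul, add_div] using h₁.add h₂
  | monomial k r =>
    convert! (hasSum_choose_mul_pow_of_norm_lt_one k hq).mul_left (c ^ k * r) using 1
    · ext j
      rw [chooseFunctional_monomial]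
      ring
    · rw [eval_monomial, div_pow, mul_pow, pow_succ, ← div_div]
      ring

theorem hasSum_WFPoly_eval (m n : ℕ) {q : ℝ} (hq : ‖q‖ < 1) :
    HasSum (fun j : ℕ => (1 + (m : ℝ) * j) ^ n * q ^ j)
      ((WFPoly m n).eval (m * q / (1 - q)) / (1 - q)) := by
  simpa only [chooseFunctional_WFPoly] using hasSum_chooseFunctional_mul_pow (m : ℝ) hq (WFPoly m n)

theorem hasSum_WFPoly_eval_of_pos (m n : ℕ) (hm : 1 ≤ m) {x : ℝ} (hx : 0 < x) :
    HasSum (fun j : ℕ => (1 / (m : ℝ) + j) ^ n * ((1 + m / x)⁻¹) ^ j)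
      ((WFPoly m n).eval x * (x + m) / m ^ (n + 1)) := by
  have hm₀ : (0 : ℝ) < m := by exact_mod_cast hm
  have hq : ‖(1 + m / x)⁻¹‖ < 1 := by
    rw [Real.norm_of_nonneg (by positivity)]
    exact inv_lt_one_of_one_lt₀ (lt_add_of_pos_right 1 (div_pos hm₀ hx))
  have h_one_sub : 1 - (1 + m / x)⁻¹ = m / (x + m) := by
    field_simp
    ring
  have h_eval : m * (1 + m / x)⁻¹ / (1 - (1 + m / x)⁻¹) = x := by
    rw [h_one_sub]
    field_simp
  convert! (hasSum_WFPoly_eval m n hq).mul_left ((1 / (m : ℝ)) ^ n) using 1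
  · ext j
    rw [← mul_assoc, ← mul_pow]
    congr 2
    field_simp
  · rw [h_eval, h_one_sub, one_div, inv_pow, pow_succ]
    field_simp

end Dobinski

section RiemannSum

variable {E : Type*} [NormedAddCommGroup E] [NormedSpace ℝ E]

theorem sum_intervalIntegral_arithmeticProgression {f : ℝ → E} {a b : ℝ} (ha : 0 ≤ a)
    (hf : IntegrableOn f (Ioi b)) (N : ℕ) :
    ∑ k ∈ Finset.range N, ∫ t in (b + a * k)..(b + a * (k + 1 : ℕ)), f t =
      ∫ t in b..(b + a * N), f t := by
  have hf_from (k : ℕ) : IntervalIntegrable f volume b (b + a * k) :=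
    (intervalIntegrable_iff_integrableOn_Ioc_of_le (le_add_of_nonneg_right (by positivity))).2
      (hf.mono_set Ioc_subset_Ioi_self)
  simpa using intervalIntegral.sum_integral_adjacent_intervals (μ := volume)
    (a := fun k : ℕ => b + a * k) (n := N) fun k _ => (hf_from k).symm.trans (hf_from (k + 1))

variable [CompleteSpace E]

theorem norm_smul_sub_intervalIntegral_le {g g' : ℝ → E} {u v : ℝ} (huv : u ≤ v)
    (hg : ∀ x ∈ Icc u v, HasDerivAt g (g' x) x) (hg' : IntervalIntegrable g' volume u v) :
    ‖(v - u) • g u - ∫ t in u..v, g t‖ ≤ (v - u) * ∫ t in u..v, ‖g' t‖ := by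
  have hg_int : IntervalIntegrable g volume u v :=
    ContinuousOn.intervalIntegrable_of_Icc huv (HasDerivAt.continuousOn hg)
  have h_norm_sub : ∀ t ∈ Ioc u v, ‖g u - g t‖ ≤ ∫ s in u..v, ‖g' s‖ := by
    intro t ht
    have h_sub : Icc u t ⊆ Icc u v := Icc_subset_Icc_right ht.2
    have h_ftc : ∫ s in u..t, g' s = g t - g u :=
      intervalIntegral.integral_eq_sub_of_hasDerivAt
        (fun x hx => hg x (h_sub (uIcc_of_le ht.1.le ▸ hx)))
        (hg'.mono_set (by rwa [uIcc_of_le ht.1.le, uIcc_of_le huv]))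
    calc ‖g u - g t‖ = ‖∫ s in u..t, g' s‖ := by rw [h_ftc, norm_sub_rev]
      _ ≤ ∫ s in u..t, ‖g' s‖ := intervalIntegral.norm_integral_le_integral_norm ht.1.le
      _ ≤ ∫ s in u..v, ‖g' s‖ := intervalIntegral.integral_mono_interval le_rfl ht.1.le ht.2
          (Eventually.of_forall fun _ => norm_nonneg _) hg'.norm
  calc ‖(v - u) • g u - ∫ t in u..v, g t‖ = ‖∫ t in u..v, (g u - g t)‖ := by
        rw [intervalIntegral.integral_sub intervalIntegrable_const hg_int,
          intervalIntegral.integral_const]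
    _ ≤ (∫ s in u..v, ‖g' s‖) * |v - u| :=
        intervalIntegral.norm_integral_le_of_norm_le_const (by rwa [uIoc_of_le huv])
    _ = (v - u) * ∫ s in u..v, ‖g' s‖ := by rw [abs_of_nonneg (sub_nonneg.2 huv), mul_comm]

theorem norm_smul_sub_integral_Ioi_le {g g' : ℝ → E} {a b : ℝ} {S : E} (ha : 0 < a)
    (hg : ∀ x ∈ Ici b, HasDerivAt g (g' x) x) (hg_int : IntegrableOn g (Ioi b))
    (hg'_int : IntegrableOn g' (Ioi b)) (hS : HasSum (fun j : ℕ => g (b + a * j)) S) :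
    ‖a • S - ∫ t in Ioi b, g t‖ ≤ a * ∫ t in Ioi b, ‖g' t‖ := by
  have h_atTop : Tendsto (fun N : ℕ => b + a * N) atTop atTop :=
    tendsto_atTop_add_const_left _ _ (tendsto_natCast_atTop_atTop.const_mul_atTop ha)
  have h_le (k : ℕ) : b ≤ b + a * k := le_add_of_nonneg_right (by positivity)
  have h_step (k : ℕ) : b + a * (k + 1 : ℕ) - (b + a * k) = a := by push_cast; ring
  have h_block (k : ℕ) : ‖a • g (b + a * k) - ∫ t in (b + a * k)..(b + a * (k + 1 : ℕ)), g t‖ ≤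
      a * ∫ t in (b + a * k)..(b + a * (k + 1 : ℕ)), ‖g' t‖ := by
    have h_mono : b + a * k ≤ b + a * (k + 1 : ℕ) := by linarith [h_step k]
    simpa only [h_step] using norm_smul_sub_intervalIntegral_le h_mono
      (fun x hx => hg x ((h_le k).trans hx.1))
      ((intervalIntegrable_iff_integrableOn_Ioc_of_le h_mono).2
        (hg'_int.mono_set fun _ ht => (h_le k).trans_lt ht.1))
  refine le_of_tendsto_of_tendsto'
    ((hS.tendsto_sum_nat.const_smul a).sub
      (intervalIntegral_tendsto_integral_Ioi b hg_int h_atTop)).norm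
    ((intervalIntegral_tendsto_integral_Ioi b hg'_int.norm h_atTop).const_mul a) fun N => ?_
  rw [← sum_intervalIntegral_arithmeticProgression ha.le hg_int,
    ← sum_intervalIntegral_arithmeticProgression ha.le hg'_int.norm, Finset.smul_sum,
    Finset.mul_sum, ← Finset.sum_sub_distrib]
  exact norm_sum_le_of_le _ fun k _ => h_block k

theorem tendsto_smul_of_tendsto_integral_Ioi {ι : Type*} {l : Filter ι} {g g' : ι → ℝ → E}
    {a b : ℝ} {S : ι → E} {I : E} (ha : 0 < a)
    (hg : ∀ i, ∀ x ∈ Ici b, HasDerivAt (g i) (g' i x) x) (hg_int : ∀ i, IntegrableOn (g i) (Ioi b))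
    (hg'_int : ∀ i, IntegrableOn (g' i) (Ioi b))
    (hS : ∀ i, HasSum (fun j : ℕ => g i (b + a * j)) (S i))
    (h_lim : Tendsto (fun i => ∫ t in Ioi b, g i t) l (𝓝 I))
    (h_var : Tendsto (fun i => ∫ t in Ioi b, ‖g' i t‖) l (𝓝 0)) :
    Tendsto (fun i => a • S i) l (𝓝 I) := by
  have h_diff : Tendsto (fun i => a • S i - ∫ t in Ioi b, g i t) l (𝓝 0) :=
    squeeze_zero_norm
      (fun i => norm_smul_sub_integral_Ioi_le ha (hg i) (hg_int i) (hg'_int i) (hS i))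
      (by simpa using h_var.const_mul a)
  simpa using h_diff.add h_lim

end RiemannSum

section GammaDensity

/-- The density on `(0, ∞)` of the Gamma distribution with rate `1` and shape `n + 1`. It is given
by the same formula on all of `ℝ`, so that it is smooth everywhere. -/
noncomputable def gammaDensity (n : ℕ) (y : ℝ) : ℝ := y ^ n * Real.exp (-y) / n !

theorem gammaDensity_nonneg (n : ℕ) {y : ℝ} (hy : 0 ≤ y) : 0 ≤ gammaDensity n y := by
  unfold gammaDensity
  positivity

theorem gammaDensity_le_pow_div_factorial (n : ℕ) {y b : ℝ} (hy : 0 ≤ y) (hyb : y ≤ b) :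
    gammaDensity n y ≤ b ^ n / n ! := by
  have h_exp : Real.exp (-y) ≤ 1 := Real.exp_le_one_iff.2 (neg_nonpos.2 hy)
  have h_pow : y ^ n * Real.exp (-y) ≤ b ^ n :=
    (mul_le_of_le_one_right (by positivity) h_exp).trans (pow_le_pow_left₀ hy hyb n)
  exact div_le_div_of_nonneg_right h_pow (by positivity)

theorem gammaDensity_succ (n : ℕ) (y : ℝ) :
    gammaDensity (n + 1) y = y / (n + 1) * gammaDensity n y := by
  simp only [gammaDensity, Nat.factorial_succ, Nat.cast_mul, Nat.cast_succ, pow_succ]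
  field_simp

theorem hasDerivAt_gammaDensity_succ (n : ℕ) (y : ℝ) :
    HasDerivAt (gammaDensity (n + 1)) (gammaDensity n y - gammaDensity (n + 1) y) y := by
  convert! ((hasDerivAt_pow (n + 1) y).mul (hasDerivAt_neg y).exp).div_const ((n + 1)! : ℝ) using 1
  simp only [gammaDensity, Nat.factorial_succ, Nat.cast_mul, Nat.cast_succ, Nat.add_sub_cancel]
  field_simp
  ring

theorem integrableOn_gammaDensity (n : ℕ) : IntegrableOn (gammaDensity n) (Ioi 0) := by
  have h_Gamma := (Real.GammaIntegral_convergent (s := n + 1) (by positivity)).div_const (n ! : ℝ)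
  exact IntegrableOn.congr_fun h_Gamma (fun y _ => by simp [gammaDensity, mul_comm])
    measurableSet_Ioi

theorem integral_Ioi_gammaDensity (n : ℕ) : ∫ y in Ioi 0, gammaDensity n y = 1 := by
  have h_Gamma : ∫ y in Ioi (0 : ℝ), y ^ n * Real.exp (-y) = n ! := by
    rw [← Real.Gamma_nat_eq_factorial, Real.Gamma_eq_integral (by positivity)]
    exact setIntegral_congr_fun measurableSet_Ioi fun y _ => by simp [mul_comm]
  simp only [gammaDensity]
  rw [integral_div, h_Gamma, div_self (by positivity)]

theorem tendsto_integral_Ioi_gammaDensity {b : ℝ} (hb : 0 ≤ b) :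
    Tendsto (fun n => ∫ y in Ioi b, gammaDensity n y) atTop (𝓝 1) := by
  have h_bound (n : ℕ) : ‖∫ y in (0 : ℝ)..b, gammaDensity n y‖ ≤ b ^ n / n ! * |b - 0| :=
    intervalIntegral.norm_integral_le_of_norm_le_const fun y hy => by
      rw [uIoc_of_le hb] at hy
      rw [Real.norm_of_nonneg (gammaDensity_nonneg n hy.1.le)]
      exact gammaDensity_le_pow_div_factorial n hy.1.le hy.2
  have h_head : Tendsto (fun n => ∫ y in (0 : ℝ)..b, gammaDensity n y) atTop (𝓝 0) :=
    squeeze_zero_norm h_bound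
      (by simpa using (FloorSemiring.tendsto_pow_div_factorial_atTop b).mul_const |b - 0|)
  have h_split (n : ℕ) :
      1 - ∫ y in (0 : ℝ)..b, gammaDensity n y = ∫ y in Ioi b, gammaDensity n y := by
    rw [← integral_Ioi_gammaDensity n, sub_eq_iff_eq_add',
      intervalIntegral.integral_interval_add_Ioi (integrableOn_gammaDensity n)
        ((integrableOn_gammaDensity n).mono_set (Ioi_subset_Ioi hb))]
  simpa only [h_split, sub_zero] using h_head.const_sub 1

theorem one_sub_div_sq_mul_gammaDensity (n : ℕ) (y : ℝ) :
    (1 - y / (n + 1)) ^ 2 * gammaDensity n y =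
      gammaDensity n y - 2 * gammaDensity (n + 1) y +
        (n + 2) / (n + 1) * gammaDensity (n + 2) y := by
  rw [gammaDensity_succ (n + 1), gammaDensity_succ n]
  push_cast
  field_simp
  ring

theorem integrableOn_one_sub_div_sq_mul_gammaDensity (n : ℕ) :
    IntegrableOn (fun y => (1 - y / (n + 1)) ^ 2 * gammaDensity n y) (Ioi 0) := by
  simp only [one_sub_div_sq_mul_gammaDensity]
  exact ((integrableOn_gammaDensity n).sub ((integrableOn_gammaDensity (n + 1)).const_mul 2)).add
    ((integrableOn_gammaDensity (n + 2)).const_mul _)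

theorem integral_one_sub_div_sq_mul_gammaDensity (n : ℕ) :
    ∫ y in Ioi 0, (1 - y / (n + 1)) ^ 2 * gammaDensity n y = 1 / ((n : ℝ) + 1) := by
  have h₀ := integrableOn_gammaDensity n
  have h₁ := (integrableOn_gammaDensity (n + 1)).const_mul 2
  have h₂ := (integrableOn_gammaDensity (n + 2)).const_mul (((n : ℝ) + 2) / (n + 1))
  simp only [one_sub_div_sq_mul_gammaDensity]
  rw [integral_add (h₀.fun_sub h₁) h₂, integral_sub h₀ h₁]
  simp only [integral_const_mul, integral_Ioi_gammaDensity]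
  field_simp
  ring

theorem integral_abs_sub_gammaDensity_succ_le (n : ℕ) :
    ∫ y in Ioi 0, |gammaDensity n y - gammaDensity (n + 1) y| ≤ 1 / √(n + 1) := by
  set s := √((n : ℝ) + 1)
  have hs : 0 < s := Real.sqrt_pos.2 (by positivity)
  have hs_sq : s ^ 2 = n + 1 := Real.sq_sqrt (by positivity)
  have h₀ := (integrableOn_gammaDensity n).const_mul (1 / (2 * s))
  have h₂ := (integrableOn_one_sub_div_sq_mul_gammaDensity n).const_mul (s / 2)
  -- AM-GM: `|z| ≤ 1 / (2 s) + s z² / 2`, with the weight `s` that is optimal after integration.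
  have h_amgm (z : ℝ) : |z| ≤ 1 / (2 * s) + s / 2 * z ^ 2 := by
    have h_square : 1 / (2 * s) + s / 2 * z ^ 2 - |z| = (1 - s * |z|) ^ 2 / (2 * s) := by
      rw [← sq_abs z]
      field_simp
      ring
    rw [← sub_nonneg, h_square]
    positivity
  have h_pointwise : ∀ y ∈ Ioi (0 : ℝ), |gammaDensity n y - gammaDensity (n + 1) y| ≤
      1 / (2 * s) * gammaDensity n y + s / 2 * ((1 - y / (n + 1)) ^ 2 * gammaDensity n y) := by
    intro y hy
    have h_nonneg := gammaDensity_nonneg n (le_of_lt hy)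
    calc |gammaDensity n y - gammaDensity (n + 1) y| = |1 - y / (n + 1)| * gammaDensity n y := by
          rw [gammaDensity_succ, ← one_sub_mul, abs_mul, abs_of_nonneg h_nonneg]
      _ ≤ (1 / (2 * s) + s / 2 * (1 - y / (n + 1)) ^ 2) * gammaDensity n y :=
          mul_le_mul_of_nonneg_right (h_amgm _) h_nonneg
      _ = _ := by ring
  calc ∫ y in Ioi 0, |gammaDensity n y - gammaDensity (n + 1) y|
      ≤ ∫ y in Ioi 0, (1 / (2 * s) * gammaDensity n y +
          s / 2 * ((1 - y / (n + 1)) ^ 2 * gammaDensity n y)) :=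
        setIntegral_mono_on
          ((integrableOn_gammaDensity n).sub (integrableOn_gammaDensity (n + 1))).abs
          (h₀.fun_add h₂) measurableSet_Ioi h_pointwise
    _ = 1 / (2 * s) + s / 2 * (1 / (n + 1)) := by
        rw [integral_add h₀ h₂, integral_const_mul, integral_const_mul, integral_Ioi_gammaDensity,
          integral_one_sub_div_sq_mul_gammaDensity, mul_one]
    _ = 1 / s := by
        rw [← hs_sq]
        field_simp
        ring

theorem tendsto_integral_Ioi_abs_sub_gammaDensity_succ {b : ℝ} (hb : 0 ≤ b) :
    Tendsto (fun n => ∫ y in Ioi b, |gammaDensity n y - gammaDensity (n + 1) y|) atTop (𝓝 0) := by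
  have h_sqrt : Tendsto (fun n : ℕ => 1 / √((n : ℝ) + 1)) atTop (𝓝 0) := by
    simpa only [one_div, Function.comp_def] using tendsto_inv_atTop_zero.comp
      (Real.tendsto_sqrt_atTop.comp
        (tendsto_atTop_add_const_right _ 1 tendsto_natCast_atTop_atTop))
  refine squeeze_zero (fun n => integral_nonneg fun _ => abs_nonneg _) (fun n => ?_) h_sqrt
  refine le_trans ?_ (integral_abs_sub_gammaDensity_succ_le n)
  exact setIntegral_mono_set
    ((integrableOn_gammaDensity n).sub (integrableOn_gammaDensity (n + 1))).abs
    (Eventually.of_forall fun _ => abs_nonneg _) (Ioi_subset_Ioi hb).eventuallyLE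

theorem tendsto_mul_of_hasSum_gammaDensity {a b : ℝ} (ha : 0 < a) (hb : 0 ≤ b) {S : ℕ → ℝ}
    (hS : ∀ n, HasSum (fun j : ℕ => gammaDensity n (b + a * j)) (S n)) :
    Tendsto (fun n => a * S n) atTop (𝓝 1) := by
  have h_int (n : ℕ) : IntegrableOn (gammaDensity n) (Ioi b) :=
    (integrableOn_gammaDensity n).mono_set (Ioi_subset_Ioi hb)
  rw [← tendsto_add_atTop_iff_nat 1]
  exact tendsto_smul_of_tendsto_integral_Ioi ha
    (fun n y _ => hasDerivAt_gammaDensity_succ n y) (fun n => h_int (n + 1))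
    (fun n => (h_int n).sub (h_int (n + 1))) (fun n => hS (n + 1))
    ((tendsto_add_atTop_iff_nat 1).2 (tendsto_integral_Ioi_gammaDensity hb))
    (tendsto_integral_Ioi_abs_sub_gammaDensity_succ hb)

end GammaDensity

theorem tendsto_neg_log_pow_div_factorial_mul_of_hasSum {q b : ℝ} (hq₀ : 0 < q) (hq₁ : q < 1)
    (hb : 0 ≤ b) {S : ℕ → ℝ} (hS : ∀ n, HasSum (fun j : ℕ => (b + j) ^ n * q ^ j) (S n)) :
    Tendsto (fun n => (-Real.log q) ^ (n + 1) / n ! * S n) atTop (𝓝 (q ^ (-b))) := by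
  set a := -Real.log q
  have ha : 0 < a := neg_pos.2 (Real.log_neg hq₀ hq₁)
  have h_exp (z : ℝ) : Real.exp (-(a * z)) = q ^ z := by
    rw [Real.rpow_def_of_pos hq₀, ← neg_mul, neg_neg]
  have h_term (n j : ℕ) :
      gammaDensity n (a * b + a * j) = a ^ n * q ^ b / n ! * ((b + j) ^ n * q ^ j) := by
    rw [gammaDensity, ← mul_add, h_exp, Real.rpow_add hq₀, Real.rpow_natCast, mul_pow]
    ring
  have h_gamma (n : ℕ) :
      HasSum (fun j : ℕ => gammaDensity n (a * b + a * j)) (a ^ n * q ^ b / n ! * S n) := by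
    simpa only [h_term] using (hS n).mul_left (a ^ n * q ^ b / n !)
  have h_lim := (tendsto_mul_of_hasSum_gammaDensity ha (by positivity) h_gamma).const_mul (q ^ (-b))
  rw [mul_one] at h_lim
  refine h_lim.congr fun n => ?_
  rw [Real.rpow_neg hq₀.le, pow_succ]
  field_simp

theorem whitneyFubini_asymptotic_general (m : ℕ) (hm : 1 ≤ m) {x : ℝ} (hx : 0 < x) :
    Tendsto
      (fun n : ℕ => (WFPoly m n).eval x * Real.log (m / x + 1) ^ (n + 1) /
        ((m : ℝ) ^ (n + 1) * ((1 + m / x) ^ (1 / (m : ℝ) - 1) / x) * n !))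
      atTop (𝓝 1) := by
  have hm₀ : (0 : ℝ) < m := by exact_mod_cast hm
  set c := 1 + m / x with hc
  have hc₁ : 1 < c := lt_add_of_pos_right 1 (div_pos hm₀ hx)
  have hc₀ : 0 < c := one_pos.trans hc₁
  have h_lim := tendsto_neg_log_pow_div_factorial_mul_of_hasSum (inv_pos.2 hc₀)
    (inv_lt_one_of_one_lt₀ hc₁) (by positivity) (hasSum_WFPoly_eval_of_pos m · hm hx)
  rw [Real.log_inv, neg_neg, Real.inv_rpow hc₀.le, Real.rpow_neg hc₀.le, inv_inv] at h_lim
  have h_ratio := h_lim.div_const (c ^ (1 / (m : ℝ)))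
  rw [div_self (by positivity)] at h_ratio
  refine h_ratio.congr fun n => ?_
  have h_add : x + m = c * x := by rw [hc]; field_simp
  rw [add_comm (m / x), ← hc, Real.rpow_sub_one hc₀.ne', h_add]
  field_simp

/-- For fixed `m ≥ 1`,
`F_m(n) ∼ (m·(1+m)^{1/m - 1}/log(m+1)) · mⁿ·n!/(log(m+1))ⁿ` as `n → ∞`. -/
theorem whitneyFubini_asymptotic (m : ℕ) (hm : 1 ≤ m) :
    Filter.Tendsto
      (fun n : ℕ => WFNum m n * (Real.log ((m : ℝ) + 1)) ^ (n + 1) /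
        ((m : ℝ) ^ (n + 1) * (1 + (m : ℝ)) ^ (1 / (m : ℝ) - 1) * (n.factorial : ℝ)))
      Filter.atTop (nhds 1) := by
  simpa [WFNum] using whitneyFubini_asymptotic_general m hm one_pos
end

section
/- For every fixed m ≥ 1, let W_{n,m} be the smallest index k in {0, ..., n} maximizing the k-th coefficient of the Whitney–Fubini polynomial F_m(n, x) (this coefficient equals k!·W_m(n,k)). Then W_{n,m} is asymptotically (m / ((m+1)·log(m+1)))·n: the ratio W_{n,m} / (m·n / ((m+1)·log(m+1))) tends to 1 as n → ∞. -/
open Polynomial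

/-!
Put `q = x / (x + m)`. Then `F_m(n, x) = (1 - q) ∑ₖ qᵏ (m k + 1)ⁿ`, the `n`-th moment of `m K + 1`
for a geometric variable `K`. Its largest term sits near `k = n / (-log q)`, so
`F_m(n, x) = (n / e)ⁿ (m / log (1 + m / x))ⁿ e^{o(n)}`. If `w` maximizes the coefficients of
`F_m(n, ·)`, then `F_m(n, 1) e^{t w} ≤ (n + 1) F_m(n, e^t)` for every real `t`, hence
`t w / n ≤ Λ(t) + o(1)` with `Λ(t) = log (log (1 + m) / log (1 + m e^{-t}))`. As `Λ(0) = 0`, letting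
`t → 0` from either side gives `w / n → Λ'(0) = m / ((m + 1) log (m + 1))`.
-/

open Filter Topology

/-! ### Modes of polynomials with nonnegative coefficients -/

section NonnegCoeff

variable {R : Type*} [Semiring R] [PartialOrder R] [IsOrderedRing R] {p : R[X]}

lemma coeff_mul_pow_le_eval (hp : ∀ i, 0 ≤ p.coeff i) {x : R} (hx : 0 ≤ x) (k : ℕ) :
    p.coeff k * x ^ k ≤ p.eval x := by
  rw [eval_eq_sum_range' (Nat.lt_succ_of_le (le_max_left p.natDegree k))]
  exact Finset.single_le_sum (f := fun i => p.coeff i * x ^ i)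
    (fun i _ => mul_nonneg (hp i) (pow_nonneg hx i))
    (Finset.mem_range.2 (Nat.lt_succ_of_le (le_max_right p.natDegree k)))

lemma eval_one_le_natDegree_add_one_mul_coeff {k : ℕ}
    (hk : ∀ j ≤ p.natDegree, p.coeff j ≤ p.coeff k) :
    p.eval 1 ≤ (p.natDegree + 1) * p.coeff k := by
  rw [eval_eq_sum_range]
  calc ∑ i ∈ Finset.range (p.natDegree + 1), p.coeff i * 1 ^ i
      ≤ ∑ _i ∈ Finset.range (p.natDegree + 1), p.coeff k :=
        Finset.sum_le_sum fun i hi => by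
          simpa using hk i (Nat.lt_succ_iff.1 (Finset.mem_range.1 hi))
    _ = (p.natDegree + 1) * p.coeff k := by simp

lemma eval_one_mul_pow_le_natDegree_add_one_mul_eval (hp : ∀ i, 0 ≤ p.coeff i)
    {k : ℕ} (hk : ∀ j ≤ p.natDegree, p.coeff j ≤ p.coeff k) {x : R} (hx : 0 ≤ x) :
    p.eval 1 * x ^ k ≤ (p.natDegree + 1) * p.eval x := by
  have hpow : 0 ≤ x ^ k := pow_nonneg hx k
  have hdeg : (0 : R) ≤ p.natDegree + 1 := add_nonneg (Nat.cast_nonneg _) zero_le_one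
  calc p.eval 1 * x ^ k ≤ (p.natDegree + 1) * p.coeff k * x ^ k :=
        mul_le_mul_of_nonneg_right (eval_one_le_natDegree_add_one_mul_coeff hk) hpow
    _ = (p.natDegree + 1) * (p.coeff k * x ^ k) := mul_assoc _ _ _
    _ ≤ (p.natDegree + 1) * p.eval x :=
        mul_le_mul_of_nonneg_left (coeff_mul_pow_le_eval hp hx k) hdeg

end NonnegCoeff

lemma eval_pos_of_coeff_nonneg {R : Type*} [Semiring R] [PartialOrder R] [IsStrictOrderedRing R]
    {p : R[X]} (hp : ∀ i, 0 ≤ p.coeff i) (hp0 : p ≠ 0) {x : R} (hx : 0 < x) : 0 < p.eval x :=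
  (mul_pos ((hp _).lt_of_ne' (leadingCoeff_ne_zero.2 hp0)) (pow_pos hx p.natDegree)).trans_le
    (coeff_mul_pow_le_eval hp hx.le p.natDegree)

lemma mul_mode_le_log_eval_ratio {p : ℝ[X]} (hp : ∀ i, 0 ≤ p.coeff i) (hp0 : p ≠ 0) {k : ℕ}
    (hk : ∀ j ≤ p.natDegree, p.coeff j ≤ p.coeff k) (t : ℝ) :
    t * k ≤ Real.log (p.eval (Real.exp t) / p.eval 1) + Real.log (p.natDegree + 1) := by
  have hone : 0 < p.eval 1 := eval_pos_of_coeff_nonneg hp hp0 one_pos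
  have hexp : 0 < p.eval (Real.exp t) := eval_pos_of_coeff_nonneg hp hp0 (Real.exp_pos t)
  rw [← Real.log_mul (by positivity) (by positivity), Real.le_log_iff_exp_le (by positivity),
    mul_comm t, Real.exp_nat_mul, div_mul_eq_mul_div, le_div_iff₀ hone]
  linarith [eval_one_mul_pow_le_natDegree_add_one_mul_eval hp hk (Real.exp_pos t).le]

section DerivativeSqueeze

variable {ι : Type*} {l : Filter ι} {u : ι → ℝ} {v : ℝ → ι → ℝ} {Λ : ℝ → ℝ} {c : ℝ}

lemma eventually_lt_of_eventually_mul_le {c' : ℝ} (hc : c < c')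
    (huv : ∀ t > 0, ∀ᶠ i in l, t * u i ≤ v t i) (hv : ∀ t > 0, Tendsto (v t) l (𝓝 (Λ t)))
    (hΛ0 : Λ 0 = 0) (hΛ : HasDerivWithinAt Λ c (Set.Ici 0) 0) : ∀ᶠ i in l, u i < c' := by
  obtain ⟨t, hslope, ht⟩ :=
    ((hΛ.liminf_right_slope_le hc).and_eventually self_mem_nhdsWithin).exists
  replace ht : 0 < t := ht
  have hlt : Λ t < t * c' := by
    rwa [slope_def_field, hΛ0, sub_zero, sub_zero, div_lt_iff₀' ht] at hslope
  filter_upwards [huv t ht, (hv t ht).eventually_lt_const hlt] with i hle hlt'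
  exact lt_of_mul_lt_mul_left (hle.trans_lt hlt') ht.le

lemma tendsto_of_eventually_mul_le
    (huv : ∀ t, ∀ᶠ i in l, t * u i ≤ v t i) (hv : ∀ t, Tendsto (v t) l (𝓝 (Λ t)))
    (hΛ0 : Λ 0 = 0) (hΛ : HasDerivAt Λ c 0) : Tendsto u l (𝓝 c) := by
  refine tendsto_order.2 ⟨fun c' hc' => ?_, fun c' hc' =>
    eventually_lt_of_eventually_mul_le hc' (fun t _ => huv t) (fun t _ => hv t) hΛ0
      hΛ.hasDerivWithinAt⟩
  have hneg : HasDerivAt (fun t => Λ (-t)) (-c) 0 := by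
    simpa [Function.comp_def] using
      HasDerivAt.comp_of_eq (0 : ℝ) hΛ (hasDerivAt_neg (0 : ℝ)) neg_zero.symm
  have hlt := eventually_lt_of_eventually_mul_le (u := fun i => -u i) (neg_lt_neg hc')
    (fun t _ => by simpa using huv (-t)) (fun t _ => hv (-t)) (by simpa using hΛ0)
    hneg.hasDerivWithinAt
  simpa only [neg_lt_neg_iff] using hlt

end DerivativeSqueeze

theorem tendsto_mode_div_of_tendsto_log_eval {p : ℕ → ℝ[X]} {w : ℕ → ℕ} {Λ : ℝ → ℝ} {c : ℝ}
    (hp : ∀ n i, 0 ≤ (p n).coeff i) (hp0 : ∀ n, p n ≠ 0)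
    (hdeg : Tendsto (fun n : ℕ => Real.log ((p n).natDegree + 1) / n) atTop (𝓝 0))
    (hmode : ∀ n, ∀ j ≤ (p n).natDegree, (p n).coeff j ≤ (p n).coeff (w n))
    (hlim : ∀ t, Tendsto (fun n : ℕ => Real.log ((p n).eval (Real.exp t) / (p n).eval 1) / n)
      atTop (𝓝 (Λ t)))
    (hΛ : HasDerivAt Λ c 0) : Tendsto (fun n => (w n : ℝ) / n) atTop (𝓝 c) := by
  have hΛ0 : Λ 0 = 0 := by
    refine tendsto_nhds_unique (hlim 0) (tendsto_const_nhds.congr fun n => ?_)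
    rw [Real.exp_zero, Real.log_div_self, zero_div]
  refine tendsto_of_eventually_mul_le (fun t => .of_forall fun n => ?_)
    (fun t => by simpa only [add_zero] using (hlim t).add hdeg) hΛ0 hΛ
  rw [← mul_div_assoc, ← add_div]
  exact div_le_div_of_nonneg_right (mul_mode_le_log_eval_ratio (hp n) (hp0 n) (hmode n) t)
    n.cast_nonneg

/-! ### Moments of a geometric variable -/

lemma tendsto_log_div_of_pow_bounds {u : ℕ → ℝ} {r a : ℝ} (hr : 0 < r) (ha : 0 < a)
    (hlower : ∀ n, a * r ^ n ≤ u n) (hupper : ∀ R > r, ∃ A, ∀ n, u n ≤ A * R ^ n) :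
    Tendsto (fun n : ℕ => Real.log (u n) / n) atTop (𝓝 (Real.log r)) := by
  have hlog_const_mul_pow {b s : ℝ} (hb : 0 < b) (hs : 0 < s) :
      Tendsto (fun n : ℕ => Real.log (b * s ^ n) / n) atTop (𝓝 (Real.log s)) := by
    refine (show Tendsto (fun n : ℕ => Real.log b / n + Real.log s) atTop _ by
      simpa using (tendsto_const_div_atTop_nhds_zero_nat (Real.log b)).add_const _).congr' ?_
    filter_upwards [eventually_ne_atTop 0] with n hn
    rw [Real.log_mul hb.ne' (by positivity), Real.log_pow]
    field_simp
  have hpos (n : ℕ) : 0 < a * r ^ n := by positivity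
  refine tendsto_order.2 ⟨fun c hc => ?_, fun c hc => ?_⟩
  · filter_upwards [(hlog_const_mul_pow ha hr).eventually_const_lt hc] with n hn
    exact hn.trans_le (by have := hpos n; have := hlower n; gcongr)
  · obtain ⟨d, hrd, hdc⟩ := exists_between hc
    obtain ⟨A, hA⟩ := hupper (Real.exp d) ((Real.log_lt_iff_lt_exp hr).1 hrd)
    have hA0 : 0 < A := by simpa using (hpos 0).trans_le ((hlower 0).trans (hA 0))
    filter_upwards [(hlog_const_mul_pow hA0 (Real.exp_pos d)).eventually_lt_const
      (by rwa [Real.log_exp])] with n hn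
    refine lt_of_le_of_lt ?_ hn
    have := (hpos n).trans_le (hlower n)
    have := hA n
    gcongr

lemma pow_le_mul_exp {y s : ℝ} (hy : 0 ≤ y) (hs : 0 < s) (n : ℕ) :
    y ^ n ≤ (n / Real.exp 1) ^ n * (s⁻¹) ^ n * Real.exp (s * y) := by
  rcases eq_or_ne n 0 with rfl | hn
  · simpa using mul_nonneg hs.le hy
  have hbase : y ≤ n / Real.exp 1 * s⁻¹ * Real.exp (s * y / n) := by
    have htangent : s * y / n ≤ Real.exp (s * y / n) / Real.exp 1 := by
      rw [← Real.exp_sub]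
      linarith [Real.add_one_le_exp (s * y / n - 1)]
    calc y = n * s⁻¹ * (s * y / n) := by field_simp
      _ ≤ n * s⁻¹ * (Real.exp (s * y / n) / Real.exp 1) := by gcongr
      _ = n / Real.exp 1 * s⁻¹ * Real.exp (s * y / n) := by ring
  calc y ^ n ≤ (n / Real.exp 1 * s⁻¹ * Real.exp (s * y / n)) ^ n := by gcongr
    _ = (n / Real.exp 1) ^ n * (s⁻¹) ^ n * Real.exp (s * y) := by
      rw [mul_pow, mul_pow, ← Real.exp_nat_mul]
      field_simp

section GeometricMoments

variable {q a b : ℝ}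

lemma exists_geometric_moment_le (hq : 0 < q) (hq1 : q < 1) (ha : 0 ≤ a) (hb : 0 ≤ b) {M : ℕ → ℝ}
    (hM : ∀ n, HasSum (fun k : ℕ => (1 - q) * q ^ k * (a * k + b) ^ n) (M n)) {s : ℝ}
    (hs : 0 < s) (hqs : q * Real.exp (s * a) < 1) :
    ∃ A, ∀ n, M n ≤ (n / Real.exp 1) ^ n * (A * (s⁻¹) ^ n) := by
  have hgeom := (hasSum_geometric_of_lt_one (by positivity) hqs).mul_left
    ((1 - q) * Real.exp (s * b))
  refine ⟨(1 - q) * Real.exp (s * b) * (1 - q * Real.exp (s * a))⁻¹, fun n => ?_⟩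
  rw [mul_left_comm]
  refine hasSum_le (fun k => ?_) (hM n) (hgeom.mul_right ((n / Real.exp 1) ^ n * (s⁻¹) ^ n))
  calc (1 - q) * q ^ k * (a * k + b) ^ n
      ≤ (1 - q) * q ^ k *
          ((n / Real.exp 1) ^ n * (s⁻¹) ^ n * Real.exp (s * (a * k + b))) :=
        mul_le_mul_of_nonneg_left (pow_le_mul_exp (by positivity) hs n)
          (mul_nonneg (sub_nonneg.2 hq1.le) (pow_nonneg hq.le k))
    _ = (1 - q) * Real.exp (s * b) * (q * Real.exp (s * a)) ^ k *
          ((n / Real.exp 1) ^ n * (s⁻¹) ^ n) := by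
        rw [mul_pow, ← Real.exp_nat_mul,
          show s * (a * k + b) = s * b + k * (s * a) by ring, Real.exp_add]
        ring

/-- The summand `k = ⌈n / (-log q)⌉` alone already has the right exponential size. -/
lemma le_geometric_moment (hq : 0 < q) (hq1 : q < 1) (ha : 0 ≤ a) (hb : 0 ≤ b) {M : ℝ} {n : ℕ}
    (hM : HasSum (fun k : ℕ => (1 - q) * q ^ k * (a * k + b) ^ n) M) :
    (n / Real.exp 1) ^ n * ((1 - q) * q * (a / -Real.log q) ^ n) ≤ M := by
  have hL : 0 < -Real.log q := neg_pos.2 (Real.log_neg hq hq1)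
  have : 0 ≤ 1 - q := sub_nonneg.2 hq1.le
  set k := ⌈n / -Real.log q⌉₊
  have hk_ge : n / -Real.log q ≤ k := Nat.le_ceil _
  have hk_le : (k : ℝ) ≤ n / -Real.log q + 1 := (Nat.ceil_lt_add_one (by positivity)).le
  have hqk : q * (Real.exp 1)⁻¹ ^ n ≤ q ^ k :=
    calc q * (Real.exp 1)⁻¹ ^ n = Real.exp (Real.log q * (n / -Real.log q + 1)) := by
          have hcancel : Real.log q * (n / -Real.log q) = n * -1 := by
            rw [mul_div_assoc', div_eq_iff hL.ne']
            ring
          rw [← Real.exp_neg, ← Real.exp_nat_mul, mul_add, Real.exp_add, mul_one, Real.exp_log hq,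
            hcancel, mul_comm]
      _ ≤ Real.exp (Real.log q * k) :=
          Real.exp_le_exp.2 (mul_le_mul_of_nonpos_left hk_le (by linarith))
      _ = q ^ k := by rw [mul_comm, Real.exp_nat_mul, Real.exp_log hq]
  calc (n / Real.exp 1) ^ n * ((1 - q) * q * (a / -Real.log q) ^ n)
      = (1 - q) * (q * (Real.exp 1)⁻¹ ^ n) * (a * (n / -Real.log q)) ^ n := by
        simp only [div_eq_mul_inv, mul_pow]
        ring
    _ ≤ (1 - q) * q ^ k * (a * k + b) ^ n := by
        gcongr
        linarith [mul_le_mul_of_nonneg_left hk_ge ha]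
    _ ≤ M := le_hasSum hM k fun j _ => by positivity

theorem tendsto_log_geometric_moment (hq : 0 < q) (hq1 : q < 1) (ha : 0 < a) (hb : 0 ≤ b)
    {M : ℕ → ℝ} (hM : ∀ n, HasSum (fun k : ℕ => (1 - q) * q ^ k * (a * k + b) ^ n) (M n)) :
    Tendsto (fun n : ℕ => Real.log (M n / (n / Real.exp 1) ^ n) / n) atTop
      (𝓝 (Real.log (a / -Real.log q))) := by
  have hL : 0 < -Real.log q := neg_pos.2 (Real.log_neg hq hq1)
  have hscale (n : ℕ) : 0 < (n / Real.exp 1 : ℝ) ^ n := by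
    rcases n.eq_zero_or_pos with rfl | hn
    · simp
    · positivity
  refine tendsto_log_div_of_pow_bounds (a := (1 - q) * q) (by positivity)
    (mul_pos (sub_pos.2 hq1) hq)
    (fun n => (le_div_iff₀' (hscale n)).2 (le_geometric_moment hq hq1 ha.le hb (hM n)))
    fun R hR => ?_
  have hR0 : 0 < R := (by positivity : 0 < a / -Real.log q).trans hR
  have hconv : q * Real.exp (R⁻¹ * a) < 1 := by
    rw [gt_iff_lt, div_lt_iff₀ hL] at hR
    rw [← Real.log_neg_iff (by positivity), Real.log_mul hq.ne' (by positivity), Real.log_exp,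
      inv_mul_eq_div]
    linarith [(div_lt_iff₀' hR0).2 hR]
  obtain ⟨A, hA⟩ := exists_geometric_moment_le hq hq1 ha.le hb hM (inv_pos.2 hR0) hconv
  exact ⟨A, fun n => (div_le_iff₀' (hscale n)).2 (by simpa only [inv_inv] using hA n)⟩

end GeometricMoments

/-! ### Newton series -/

/-- The value at `k` of the Newton series `∑ⱼ cⱼ aʲ (k choose j)` attached to a polynomial
`∑ⱼ cⱼ Xʲ`. It turns the recursion of `WFPoly` into multiplication by `m k + 1`. -/
noncomputable def newtonEval {R : Type*} [CommSemiring R] (a : R) (k : ℕ) : R[X] →ₗ[R] R :=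
  lsum fun j => LinearMap.mulRight R (a ^ j * k.choose j)

lemma newtonEval_monomial {R : Type*} [CommSemiring R] (a : R) (k j : ℕ) (c : R) :
    newtonEval a k (monomial j c) = c * (a ^ j * k.choose j) := by
  simp [newtonEval, lsum_apply, sum_monomial_index, mul_assoc]

lemma newtonEval_X_add_one_mul_add_mul_derivative {R : Type*} [CommRing R] (a : R) (k : ℕ)
    (p : R[X]) :
    newtonEval a k ((X + 1) * p + (X ^ 2 + C a * X) * derivative p) =
      (a * k + 1) * newtonEval a k p := by
  induction p using Polynomial.induction_on' with
  | add p r hp hr =>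
    rw [map_add (newtonEval a k) p r, mul_add (a * k + 1), ← hp, ← hr, ← map_add, derivative_add]
    congr 1
    ring
  | monomial j c =>
    have hstep : (X + 1) * monomial j c + (X ^ 2 + C a * X) * derivative (monomial j c) =
        monomial (j + 1) (c * (j + 1)) + monomial j (c * (a * j + 1)) := by
      cases j with
      | zero =>
        simp only [← C_mul_X_pow_eq_monomial, pow_zero, mul_one, derivative_C, mul_zero, add_zero,
          zero_add, Nat.cast_zero, pow_one]
        ring
      | succ j =>
        simp only [← C_mul_X_pow_eq_monomial, derivative_mul, derivative_C, zero_mul,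
          derivative_X_pow_succ, map_add, map_natCast, map_one, zero_add, Nat.cast_add,
          Nat.cast_one, map_mul]
        ring
    have hchoose : (k.choose (j + 1) : R) * (j + 1) = k.choose j * (k - j) := by
      rcases le_or_gt j k with hjk | hkj
      · have := congrArg (Nat.cast (R := R)) (Nat.choose_succ_right_eq k j)
        simpa [Nat.cast_sub hjk] using this
      · simp [Nat.choose_eq_zero_of_lt hkj, Nat.choose_eq_zero_of_lt (hkj.trans j.lt_succ_self)]
    rw [hstep, map_add, newtonEval_monomial, newtonEval_monomial, newtonEval_monomial, pow_succ]
    linear_combination c * a ^ j * a * hchoose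

lemma hasSum_choose_mul_geometric {𝕜 : Type*} [NormedField 𝕜] [HasSummableGeomSeries 𝕜] {q : 𝕜}
    (hq : ‖q‖ < 1) (j : ℕ) :
    HasSum (fun k : ℕ => k.choose j * q ^ k) (q ^ j / (1 - q) ^ (j + 1)) := by
  rw [← hasSum_nat_add_iff' j, Finset.sum_eq_zero fun i hi => by
    rw [Nat.choose_eq_zero_of_lt (Finset.mem_range.1 hi), Nat.cast_zero, zero_mul], sub_zero]
  convert! (hasSum_choose_mul_geometric_of_norm_lt_one j hq).mul_left (q ^ j) using 1
  · ext k
    rw [pow_add]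
    ring
  · ring

lemma hasSum_geometric_mul_newtonEval {𝕜 : Type*} [NormedField 𝕜] [HasSummableGeomSeries 𝕜]
    {q : 𝕜} (hq : ‖q‖ < 1) (a : 𝕜) (p : 𝕜[X]) :
    HasSum (fun k : ℕ => (1 - q) * q ^ k * newtonEval a k p) (p.eval (a * q / (1 - q))) := by
  have hq1 : 1 - q ≠ 0 := by
    intro h
    rw [← sub_eq_zero.1 h, norm_one] at hq
    exact hq.false
  induction p using Polynomial.induction_on' with
  | add p r hp hr => simpa only [map_add, mul_add, eval_add] using hp.add hr
  | monomial j c =>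
    convert! (hasSum_choose_mul_geometric hq j).mul_left ((1 - q) * (c * a ^ j)) using 1
    · ext k
      rw [newtonEval_monomial]
      ring
    · rw [eval_monomial, div_pow, mul_pow]
      field_simp
      ring

/-! ### Whitney–Fubini polynomials -/

lemma coeff_zero_WFPoly (m n : ℕ) : (WFPoly m n).coeff 0 = 1 := by
  induction n with
  | zero => simp [WFPoly]
  | succ n ih => simp [WFPoly, mul_coeff_zero, ih]

lemma coeff_succ_WFPoly_succ (m n k : ℕ) :
    (WFPoly m (n + 1)).coeff (k + 1) =
      (k + 1) * (WFPoly m n).coeff k + (m * (k + 1) + 1) * (WFPoly m n).coeff (k + 1) := by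
  have hsplit : WFPoly m (n + 1) = X * WFPoly m n + WFPoly m n +
      (X * (X * derivative (WFPoly m n)) + C (m : ℝ) * (X * derivative (WFPoly m n))) := by
    rw [WFPoly]
    ring
  rw [hsplit]
  cases k <;> simp only [coeff_add, coeff_X_mul, coeff_C_mul, coeff_derivative,
    coeff_X_mul_zero] <;> push_cast <;> ring

lemma coeff_WFPoly_nonneg (m n k : ℕ) : 0 ≤ (WFPoly m n).coeff k := by
  induction n generalizing k with
  | zero =>
    rw [WFPoly, coeff_one]
    positivity
  | succ n ih =>
    cases k with
    | zero => exact (coeff_zero_WFPoly m (n + 1)).symm ▸ zero_le_one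
    | succ k =>
      rw [coeff_succ_WFPoly_succ]
      have := ih k
      have := ih (k + 1)
      positivity

lemma WFPoly_ne_zero (m n : ℕ) : WFPoly m n ≠ 0 := fun h => by
  simpa [h] using coeff_zero_WFPoly m n

lemma natDegree_WFPoly_le (m n : ℕ) : (WFPoly m n).natDegree ≤ n := by
  rw [natDegree_le_iff_coeff_eq_zero]
  induction n with
  | zero =>
    intro k hk
    rw [WFPoly, coeff_one, if_neg hk.ne']
  | succ n ih =>
    rintro (_ | k) hk
    · exact absurd hk (Nat.not_lt_zero _)
    · rw [coeff_succ_WFPoly_succ, ih k (by omega), ih (k + 1) (by omega), mul_zero, mul_zero,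
        add_zero]

lemma tendsto_log_natDegree_WFPoly_div (m : ℕ) :
    Tendsto (fun n : ℕ => Real.log ((WFPoly m n).natDegree + 1) / n) atTop (𝓝 0) := by
  have hlog : Tendsto (fun n : ℕ => Real.log ((n : ℝ) + 1) / n) atTop (𝓝 0) := by
    simpa [Function.comp_def] using
      (Real.tendsto_pow_log_div_mul_add_atTop 1 (-1) 1 one_ne_zero).comp
        (tendsto_atTop_add_const_right _ (1 : ℝ) tendsto_natCast_atTop_atTop)
  refine squeeze_zero (fun n => ?_) (fun n => ?_) hlog
  · have : 0 ≤ Real.log ((WFPoly m n).natDegree + 1) := Real.log_nonneg (by simp)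
    positivity
  · have : ((WFPoly m n).natDegree : ℝ) ≤ n := by exact_mod_cast natDegree_WFPoly_le m n
    gcongr

lemma newtonEval_WFPoly (m n k : ℕ) : newtonEval (m : ℝ) k (WFPoly m n) = (m * k + 1) ^ n := by
  induction n with
  | zero => rw [WFPoly, pow_zero, ← monomial_zero_one, newtonEval_monomial]; simp
  | succ n ih => rw [WFPoly, newtonEval_X_add_one_mul_add_mul_derivative, ih, pow_succ']

theorem hasSum_eval_WFPoly (m n : ℕ) {q : ℝ} (hq : |q| < 1) :
    HasSum (fun k : ℕ => (1 - q) * q ^ k * (m * k + 1) ^ n)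
      ((WFPoly m n).eval (m * q / (1 - q))) := by
  simpa only [newtonEval_WFPoly] using hasSum_geometric_mul_newtonEval hq (m : ℝ) (WFPoly m n)

/-- The exponential growth rate of `F_m(n, x) / (n / e)ⁿ`. -/
noncomputable def whitneyRate (m : ℕ) (x : ℝ) : ℝ :=
  Real.log (m / Real.log (1 + m / x))

lemma tendsto_log_eval_WFPoly {m : ℕ} (hm : 1 ≤ m) {x : ℝ} (hx : 0 < x) :
    Tendsto (fun n : ℕ => Real.log ((WFPoly m n).eval x / (n / Real.exp 1) ^ n) / n) atTop
      (𝓝 (whitneyRate m x)) := by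
  have hm0 : (0 : ℝ) < m := by exact_mod_cast hm
  set q := x / (x + m)
  have hq : 0 < q := by positivity
  have hq1 : q < 1 := (div_lt_one (by positivity)).2 (by linarith)
  have hxq : m * q / (1 - q) = x := by
    have : 1 - q = m / (x + m) := by simp only [q]; field_simp; ring
    rw [this]
    simp only [q]
    field_simp
  have hlogq : -Real.log q = Real.log (1 + m / x) := by
    rw [← Real.log_inv, inv_div, add_div, div_self hx.ne']
  rw [whitneyRate, ← hlogq]
  refine tendsto_log_geometric_moment hq hq1 hm0 zero_le_one fun n => ?_
  simpa only [hxq] using hasSum_eval_WFPoly m n (abs_lt.2 ⟨by linarith, hq1⟩)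

lemma tendsto_log_eval_WFPoly_ratio {m : ℕ} (hm : 1 ≤ m) {x y : ℝ} (hx : 0 < x) (hy : 0 < y) :
    Tendsto (fun n : ℕ => Real.log ((WFPoly m n).eval x / (WFPoly m n).eval y) / n) atTop
      (𝓝 (whitneyRate m x - whitneyRate m y)) := by
  refine ((tendsto_log_eval_WFPoly hm hx).sub (tendsto_log_eval_WFPoly hm hy)).congr' ?_
  filter_upwards [eventually_gt_atTop 0] with n hn
  have hpos {z : ℝ} (hz : 0 < z) : 0 < (WFPoly m n).eval z :=
    eval_pos_of_coeff_nonneg (coeff_WFPoly_nonneg m n) (WFPoly_ne_zero m n) hz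
  have := hpos hx
  have := hpos hy
  rw [← sub_div, ← Real.log_div (by positivity) (by positivity),
    div_div_div_cancel_right₀ (by positivity)]

lemma hasDerivAt_whitneyRate_exp {m : ℕ} (hm : 1 ≤ m) :
    HasDerivAt (fun t => whitneyRate m (Real.exp t)) (m / ((m + 1) * Real.log (m + 1))) 0 := by
  have hm0 : (0 : ℝ) < m := by exact_mod_cast hm
  have hlog : 0 < Real.log (1 + m) := Real.log_pos (by linarith)
  have hinner : HasDerivAt (fun t : ℝ => 1 + m / Real.exp t) (-m) 0 := by
    simpa using ((hasDerivAt_const (0 : ℝ) (m : ℝ)).fun_div (Real.hasDerivAt_exp 0)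
      (Real.exp_ne_zero 0)).const_add 1
  have hrate := ((hasDerivAt_const (0 : ℝ) (m : ℝ)).fun_div (hinner.log (by positivity))
    (by simpa using hlog.ne')).log (by
      rw [Real.exp_zero, div_one]
      positivity)
  refine hrate.congr_deriv ?_
  simp only [Real.exp_zero, div_one, add_comm (m : ℝ) 1]
  field_simp
  ring

theorem mode_whitney_asymptotic_general {m : ℕ} (hm : 1 ≤ m) {W : ℕ → ℕ}
    (hmax : ∀ n, ∀ k ≤ n, (WFPoly m n).coeff k ≤ (WFPoly m n).coeff (W n)) :
    Tendsto (fun n : ℕ => (W n : ℝ) / (m * n / ((m + 1) * Real.log (m + 1)))) atTop (𝓝 1) := by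
  have hm0 : (0 : ℝ) < m := by exact_mod_cast hm
  have hlog : 0 < Real.log ((m : ℝ) + 1) := Real.log_pos (by linarith)
  have hslope : (m : ℝ) / ((m + 1) * Real.log (m + 1)) ≠ 0 := by positivity
  have hmode : Tendsto (fun n => (W n : ℝ) / n) atTop (𝓝 (m / ((m + 1) * Real.log (m + 1)))) :=
    tendsto_mode_div_of_tendsto_log_eval (coeff_WFPoly_nonneg m) (WFPoly_ne_zero m)
      (tendsto_log_natDegree_WFPoly_div m)
      (fun n k hk => hmax n k (hk.trans (natDegree_WFPoly_le m n)))
      (fun t => tendsto_log_eval_WFPoly_ratio hm (Real.exp_pos t) one_pos)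
      ((hasDerivAt_whitneyRate_exp hm).sub_const _)
  have hratio := hmode.div_const (m / ((m + 1) * Real.log (m + 1)))
  rw [div_self hslope] at hratio
  refine hratio.congr fun n => ?_
  rw [div_div, mul_comm (n : ℝ), div_mul_eq_mul_div]

/-- For fixed `m ≥ 1`, the smallest index `W n` in `{0, …, n}` maximizing the `k`-th
coefficient `k!·W_m(n,k)` of the Whitney–Fubini polynomial `F_m(n,x)` satisfies
`W n ∼ m·n/((m+1)·log(m+1))` as `n → ∞`. -/
theorem mode_whitney_asymptotic
    (m : ℕ) (hm : 1 ≤ m) (W : ℕ → ℕ)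
    (hmem : ∀ n, W n ≤ n)
    (hmax : ∀ n, ∀ k ≤ n, (WFPoly m n).coeff k ≤ (WFPoly m n).coeff (W n))
    (hmin : ∀ n, ∀ k ≤ n,
      (∀ j ≤ n, (WFPoly m n).coeff j ≤ (WFPoly m n).coeff k) → W n ≤ k) :
    Filter.Tendsto
      (fun n : ℕ => (W n : ℝ) / ((m : ℝ) * (n : ℝ) / (((m : ℝ) + 1) * Real.log ((m : ℝ) + 1))))
      Filter.atTop (nhds 1) :=
  mode_whitney_asymptotic_general hm hmax
end
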